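/- Let n and n^l both lie in ℤ₊^{m₁+1}(•) × ℤ₊^{m₂+1}(•) with n_{1,m₁} ≥ 1, let A,B ∈ ℝ with |A| + |B| > 0, set G_{n,j} = A·A_{n,j} + B·A_{n^l,j}, and let k = max{ k′ ∈ {0,…,m₁} : G_{n,k′} is not identically zero }. Then k ≥ l₁ and G_{n,j} ≡ 0 for k < j ≤ m₁. For 0 ≤ j ≤ l₁, G_{n,j} has at most N_{1,j} zeros in ℂ∖Δ¹_{j+1}, counting multiplicities (Δ¹_{m₁+1} = ∅), and it changes sign at at least N_{1,j} − 1 points in the interior of Δ¹_j. For l₁ < j ≤ k, G_{n,j} has at most N_{1,j} − 1 zeros in ℂ∖Δ¹_{j+1} and changes sign at at least N_{1,j} − 2 points in the interior of Δ¹_j. Consequently, for 0 ≤ j ≤ k, all zeros of G_{n,j} in ℂ∖Δ¹_{j+1} are real and simple. -/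

import Mathlib

open MeasureTheory Polynomial Set Filter

noncomputable section

/-- The support of a Borel measure on `ℝ`: points all of whose open neighborhoods
have positive measure. -/
def msupport (μ : Measure ℝ) : Set ℝ :=
  {x : ℝ | ∀ U : Set ℝ, IsOpen U → x ∈ U → μ U ≠ 0}

/-- The copy of a real set inside `ℂ`. -/
def cpx (s : Set ℝ) : Set ℂ := (fun x : ℝ => (x : ℂ)) '' s

/-- `nikhat μ e j g` is the Cauchy transform of the measure `⟨σ_j, …, σ_{j+g}⟩`,
where `σ_i = (e i) • (μ i)` is a measure of constant sign. -/
def nikhat (μ : ℕ → Measure ℝ) (e : ℕ → ℝ) : ℕ → ℕ → ℂ → ℂ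
  | j, 0, z => (e j : ℂ) * ∫ t, 1 / (z - (t : ℂ)) ∂(μ j)
  | j, g + 1, z => (e j : ℂ) * ∫ t, nikhat μ e (j + 1) g (t : ℂ) / (z - (t : ℂ)) ∂(μ j)

/-- The Cauchy transform `ŝ_{j+1,k}` of `s_{j+1,k} = ⟨σ_{j+1},…,σ_k⟩`, with the
convention that it is `≡ 1` when `k ≤ j`. -/
def wt (μ : ℕ → Measure ℝ) (e : ℕ → ℝ) (j k : ℕ) (z : ℂ) : ℂ :=
  if j < k then nikhat μ e (j + 1) (k - (j + 1)) z else 1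

/-- Integral of `f` against the measure `s_{j,k} = ⟨σ_j, …, σ_k⟩`
(whose density with respect to `σ_j` is `ŝ_{j+1,k}`). -/
def sInt (μ : ℕ → Measure ℝ) (e : ℕ → ℝ) (j k : ℕ) (f : ℝ → ℂ) : ℂ :=
  (e j : ℂ) * ∫ x, f x * wt μ e j k (x : ℂ) ∂(μ j)

/-- The linear form `𝒜_{n,j}(z) = ∑_{k=j}^{m₁} a_k(z) ŝ¹_{j+1,k}(z)`. -/
def linForm (μ : ℕ → Measure ℝ) (e : ℕ → ℝ) (m₁ j : ℕ) (A : ℕ → Polynomial ℝ)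
    (z : ℂ) : ℂ :=
  ∑ k ∈ Finset.Icc j m₁, Polynomial.aeval z (A k) * wt μ e j k z

/-- The linear forms with negative index:
`𝒜_{n,-j-1}(z) = ∫ 𝒜_{n,-j}(x) dσ²_j(x) / (z - x)`. -/
def linFormNeg (μ : ℕ → Measure ℝ) (e : ℕ → ℝ) (F : ℂ → ℂ) : ℕ → ℂ → ℂ
  | 0 => F
  | j + 1 => fun z => (e j : ℂ) * ∫ x, linFormNeg μ e F j (x : ℂ) / (z - (x : ℂ)) ∂(μ j)

/-- A Nikishin system `N(σ_0,…,σ_m)` of measures of constant sign `σ_j = (e j) • (μ j)`,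
with `Co(supp σ_j) = Δ_j = [a j, b j]` and `Δ_j ∩ Δ_{j+1} = ∅`. -/
structure NikSys (m : ℕ) where
  μ : ℕ → Measure ℝ
  e : ℕ → ℝ
  a : ℕ → ℝ
  b : ℕ → ℝ
  fin : ∀ j, IsFiniteMeasure (μ j)
  sgn : ∀ j, e j = 1 ∨ e j = -1
  hull : ∀ j ≤ m, convexHull ℝ (msupport (μ j)) = Set.Icc (a j) (b j)
  inf : ∀ j ≤ m, (msupport (μ j)).Infinite
  disj : ∀ j < m, Set.Icc (a j) (b j) ∩ Set.Icc (a (j + 1)) (b (j + 1)) = ∅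

/-- Decreasing multi-index (the class `ℤ₊^{m+1}(•)`). -/
def Decr (m : ℕ) (n : ℕ → ℕ) : Prop := ∀ j < m, n (j + 1) ≤ n j

/-- `|n| = n_0 + ⋯ + n_m`. -/
def msum (m : ℕ) (n : ℕ → ℕ) : ℕ := ∑ j ∈ Finset.range (m + 1), n j

/-- `N_{1,j} = n_j + ⋯ + n_m` (partial tail sums). -/
def tailSum (m : ℕ) (n : ℕ → ℕ) (j : ℕ) : ℕ := ∑ k ∈ Finset.Icc j m, n k

/-- Mixed type multiple orthogonal polynomials relative to `(n1;n2)` and `(S1,S2)`. -/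
def IsMOP (m₁ m₂ : ℕ) (S1 : NikSys m₁) (S2 : NikSys m₂)
    (n1 n2 : ℕ → ℕ) (A : ℕ → Polynomial ℝ) : Prop :=
  (∀ j ≤ m₁, (A j).degree < (n1 j : WithBot ℕ)) ∧
  (∃ j ≤ m₁, A j ≠ 0) ∧
  ∀ k ≤ m₂, ∀ ν < n2 k,
    sInt S2.μ S2.e 0 k (fun x => (x : ℂ) ^ ν * linForm S1.μ S1.e m₁ 0 A (x : ℂ)) = 0

/-- The "monic" normalization: the last entry different from zero has leading
coefficient `1`. -/
def MonicLast (m₁ : ℕ) (A : ℕ → Polynomial ℝ) : Prop :=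
  ∃ j ≤ m₁, (A j).Monic ∧ ∀ k, j < k → k ≤ m₁ → A k = 0

/-- `n^l`: increase the `l`-th component by one. -/
def bump (l : ℕ) (n : ℕ → ℕ) : ℕ → ℕ := fun j => if j = l then n j + 1 else n j


/-- `f` has at most `N` zeros, counting multiplicities, on `D ⊆ ℂ`
(multiplicities measured through vanishing of iterated derivatives). -/
def CZerosLE (f : ℂ → ℂ) (D : Set ℂ) (N : ℕ) : Prop :=
  ∀ (S : Finset ℂ) (ord : ℂ → ℕ), ↑S ⊆ D →
    (∀ x ∈ S, ∀ i < ord x, iteratedDeriv i f x = 0) → ∑ x ∈ S, ord x ≤ N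

/-- `f` has fewer than `N` zeros, counting multiplicities, on `D ⊆ ℂ`. -/
def CZerosLT (f : ℂ → ℂ) (D : Set ℂ) (N : ℕ) : Prop :=
  ∀ (S : Finset ℂ) (ord : ℂ → ℕ), ↑S ⊆ D →
    (∀ x ∈ S, ∀ i < ord x, iteratedDeriv i f x = 0) → ∑ x ∈ S, ord x < N

/-- A real function changes sign at `x₀`: every neighborhood of `x₀` contains points
`u, v` with `f u * f v < 0`. -/
def SignChangeAt (f : ℝ → ℝ) (x₀ : ℝ) : Prop :=
  ∀ δ > 0, ∃ u v : ℝ, |u - x₀| < δ ∧ |v - x₀| < δ ∧ f u * f v < 0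


/-!
Let `G_j` be the combined form of index `j`. Orthogonality gives `G_0` at least `|n₂|` zeros of odd
order inside `Δ_0`. If a form of index `j` has zeros off `Δ_{j+1}`, dividing them out of
`G_j = P + ∫ G_{j+1}(t) dσ_{j+1}(t) / (z - t)` turns them into orthogonality relations for `G_{j+1}`
on `Δ_{j+1}`, at the price of `deg P + 1` of them. Iterating this step bounds the number of zeros of
`G_j` from above by a total degree and, starting from `G_0`, bounds its number of odd zeros inside
`Δ_j` from below. The two bounds differ by so little that neither a pair of conjugate zeros nor a
multiple zero fits between them. Finally `G_k` cannot be the last nonzero form for `k < l₁`, since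
then `G_0` would have more zeros than its total degree allows.
-/

section ZeroMultisets

open Topology ComplexConjugate

/-- `s` is a multiset of zeros of `F` in `D`, each listed at most as often as its multiplicity.
Bounding the cardinality of all such `s` bounds the number of zeros counting multiplicities, without
having to know beforehand that there are finitely many. -/
def IsZeroMultiset (F : ℂ → ℂ) (D : Set ℂ) (s : Multiset ℂ) : Prop :=
  ∀ w ∈ s, w ∈ D ∧ (s.count w : ℕ∞) ≤ analyticOrderAt F w

namespace IsZeroMultiset

variable {F : ℂ → ℂ} {D : Set ℂ} {s : Multiset ℂ}

lemma mem (hs : IsZeroMultiset F D s) {w : ℂ} (hw : w ∈ s) : w ∈ D :=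
  (hs w hw).1

lemma count_le (hs : IsZeroMultiset F D s) (w : ℂ) : (s.count w : ℕ∞) ≤ analyticOrderAt F w := by
  by_cases hw : w ∈ s
  · exact (hs w hw).2
  · simp [Multiset.count_eq_zero_of_notMem hw]

lemma apply_eq_zero (hs : IsZeroMultiset F D s) {w : ℂ} (hw : w ∈ s) : F w = 0 := by
  refine apply_eq_zero_of_analyticOrderAt_ne_zero fun h0 ↦ ?_
  have hcount := hs.count_le w
  rw [h0, nonpos_iff_eq_zero, Nat.cast_eq_zero, Multiset.count_eq_zero] at hcount
  exact hcount hw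

lemma congr (hD : IsOpen D) {G : ℂ → ℂ} (hFG : EqOn F G D) (hs : IsZeroMultiset F D s) :
    IsZeroMultiset G D s := fun w hw ↦ by
  rw [← analyticOrderAt_congr (hFG.eventuallyEq_of_mem (hD.mem_nhds (hs.mem hw)))]
  exact hs w hw

lemma mul_left {q : ℂ → ℂ} (hq : AnalyticOnNhd ℂ q D) (hF : AnalyticOnNhd ℂ F D)
    (hs : IsZeroMultiset F D s) : IsZeroMultiset (q * F) D s := fun w hw ↦ by
  refine ⟨hs.mem hw, (hs.count_le w).trans ?_⟩
  rw [analyticOrderAt_mul (hq w (hs.mem hw)) (hF w (hs.mem hw))]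
  exact le_add_self

lemma of_cons (hD : IsOpen D) {w : ℂ} {F₁ : ℂ → ℂ} (hF₁ : AnalyticOnNhd ℂ F₁ D)
    (hF : EqOn F (fun z ↦ (z - w) * F₁ z) D) (hs : IsZeroMultiset F D (w ::ₘ s)) :
    IsZeroMultiset F₁ D s := fun v hv ↦ by
  have hvD : v ∈ D := hs.mem (Multiset.mem_cons_of_mem hv)
  refine ⟨hvD, ?_⟩
  have horder : analyticOrderAt F v =
      analyticOrderAt (fun z : ℂ ↦ z - w) v + analyticOrderAt F₁ v := by
    rw [← analyticOrderAt_mul (by fun_prop) (hF₁ v hvD)]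
    exact analyticOrderAt_congr (hF.eventuallyEq_of_mem (hD.mem_nhds hvD))
  have hcount := horder ▸ hs.count_le v
  rcases eq_or_ne v w with rfl | hvw
  · rw [analyticOrderAt_id_sub_const_self, Multiset.count_cons_self, add_comm] at hcount
    exact (ENat.add_le_add_iff_left ENat.one_ne_top).mp (by exact_mod_cast hcount)
  · rwa [analyticOrderAt_id_sub_const_of_ne hvw, Multiset.count_cons_of_ne hvw, zero_add] at hcount

lemma cons (hs : IsZeroMultiset F D s) {w : ℂ} (hw : w ∈ D)
    (hcount : ((s.count w + 1 : ℕ) : ℕ∞) ≤ analyticOrderAt F w) :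
    IsZeroMultiset F D (w ::ₘ s) := fun v hv ↦ by
  rcases eq_or_ne v w with rfl | hvw
  · exact ⟨hw, by rwa [Multiset.count_cons_self]⟩
  · rw [Multiset.count_cons_of_ne hvw]
    exact hs v ((Multiset.mem_cons.mp hv).resolve_left hvw)

lemma cons_of_notMem (hF : AnalyticOnNhd ℂ F D) (hs : IsZeroMultiset F D s) {w : ℂ} (hw : w ∈ D)
    (hFw : F w = 0) (hws : w ∉ s) : IsZeroMultiset F D (w ::ₘ s) := by
  refine hs.cons hw ?_
  rw [Multiset.count_eq_zero_of_notMem hws, zero_add, Nat.cast_one, Order.one_le_iff_ne_zero]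
  exact (hF w hw).analyticOrderAt_ne_zero.mpr hFw

lemma of_nodup (hF : AnalyticOnNhd ℂ F D) (hs : s.Nodup) (h : ∀ w ∈ s, w ∈ D ∧ F w = 0) :
    IsZeroMultiset F D s := fun w hw ↦ by
  refine ⟨(h w hw).1, ?_⟩
  rw [Multiset.count_eq_one_of_mem hs hw, Nat.cast_one, Order.one_le_iff_ne_zero]
  exact (hF w (h w hw).1).analyticOrderAt_ne_zero.mpr (h w hw).2

lemma card_le_natDegree {P : ℂ[X]} (hP : P ≠ 0) (hs : IsZeroMultiset P.eval univ s) :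
    s.card ≤ P.natDegree := by
  induction s using Multiset.induction generalizing P with
  | empty => exact Nat.zero_le _
  | cons w s ih =>
    obtain ⟨Q, rfl⟩ := dvd_iff_isRoot.mpr (hs.apply_eq_zero (Multiset.mem_cons_self w s))
    have hQ : Q ≠ 0 := right_ne_zero_of_mul hP
    have hQs : IsZeroMultiset Q.eval univ s :=
      hs.of_cons isOpen_univ (fun z _ ↦ Q.differentiable.analyticAt z) fun z _ ↦ by simp
    rw [natDegree_mul (X_sub_C_ne_zero w) hQ, natDegree_X_sub_C, Multiset.card_cons, add_comm]
    exact Nat.add_le_add_left (ih hQ hQs) 1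

end IsZeroMultiset

section Conj

variable {F : ℂ → ℂ} {D : Set ℂ}

lemma analyticAt_conj_conj {z : ℂ} (hF : AnalyticAt ℂ F z) :
    AnalyticAt ℂ (fun w ↦ conj (F (conj w))) (conj z) := by
  rw [Complex.analyticAt_iff_eventually_differentiableAt] at hF ⊢
  have hconj : Tendsto (fun w : ℂ ↦ conj w) (𝓝 (conj z)) (𝓝 z) := by
    simpa using Complex.continuous_conj.tendsto (conj z)
  filter_upwards [hconj.eventually hF] with w hw
  exact Complex.conj_conj w ▸ hw.conj_conj

lemma analyticOrderAt_le_analyticOrderAt_conj (hF : AnalyticOnNhd ℂ F D)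
    (hD : ∀ z ∈ D, conj z ∈ D) (hFc : ∀ z, F (conj z) = conj (F z)) {z : ℂ} (hz : z ∈ D) :
    analyticOrderAt F z ≤ analyticOrderAt F (conj z) := by
  refine ENat.forall_natCast_le_iff_le.mp fun n hn ↦ ?_
  rw [natCast_le_analyticOrderAt (hF z hz)] at hn
  rw [natCast_le_analyticOrderAt (hF _ (hD z hz))]
  obtain ⟨g, hg, hFg⟩ := hn
  have hconj : Tendsto (fun w : ℂ ↦ conj w) (𝓝 (conj z)) (𝓝 z) := by
    simpa using Complex.continuous_conj.tendsto (conj z)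
  refine ⟨_, analyticAt_conj_conj hg, (hconj.eventually hFg).mono fun w hw ↦ ?_⟩
  rw [← Complex.conj_conj w, hFc, hw]
  simp

lemma IsZeroMultiset.exists_conj_invariant (hF : AnalyticOnNhd ℂ F D)
    (hD : ∀ z ∈ D, conj z ∈ D) (hFc : ∀ z, F (conj z) = conj (F z)) {s : Multiset ℂ}
    (hs : IsZeroMultiset F D s) :
    ∃ s', IsZeroMultiset F D s' ∧ s.card ≤ s'.card ∧ s'.map conj = s' := by
  have hcount (s : Multiset ℂ) (w : ℂ) : (s.map conj).count w = s.count (conj w) := by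
    simpa using Multiset.count_map_eq_count' conj s (starRingEnd ℂ).injective (conj w)
  refine ⟨s ∪ s.map conj, fun w hw ↦ ?_, Multiset.card_le_card Multiset.le_union_left, ?_⟩
  · have hwD : w ∈ D := by
      rcases Multiset.mem_union.mp hw with hw | hw
      · exact hs.mem hw
      · obtain ⟨v, hv, rfl⟩ := Multiset.mem_map.mp hw
        exact hD v (hs.mem hv)
    have hconj := analyticOrderAt_le_analyticOrderAt_conj hF hD hFc (hD w hwD)
    rw [Complex.conj_conj] at hconj
    refine ⟨hwD, ?_⟩
    rw [Multiset.count_union, hcount, Monotone.map_max Nat.mono_cast]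
    exact max_le (hs.count_le w) ((hs.count_le (conj w)).trans hconj)
  · ext w
    rw [hcount, Multiset.count_union, Multiset.count_union, hcount, hcount, Complex.conj_conj,
      max_comm]

end Conj

section CardBound

variable {F : ℂ → ℂ} {D : Set ℂ} {B : ℕ}

lemma finite_zeros_of_card_lt (hF : AnalyticOnNhd ℂ F D)
    (hB : ∀ s, IsZeroMultiset F D s → s.card < B) : {z ∈ D | F z = 0}.Finite := by
  by_contra hinf
  obtain ⟨t, ht, rfl⟩ := Set.Infinite.exists_subset_card_eq hinf B
  exact lt_irrefl _ (hB t.val (.of_nodup hF t.nodup fun w hw ↦ ht hw))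

lemma cZerosLT_of_card_lt (hF : AnalyticOnNhd ℂ F D)
    (hB : ∀ s, IsZeroMultiset F D s → s.card < B) : CZerosLT F D B := by
  intro T ord hT hord
  set s := ∑ x ∈ T, Multiset.replicate (ord x) x with hs
  have hcount (w : ℂ) : s.count w = if w ∈ T then ord w else 0 := by
    simp [hs, Multiset.count_sum', Multiset.count_replicate]
  have hmem {w : ℂ} (hw : w ∈ s) : w ∈ T := by
    by_contra hwT
    exact Multiset.count_ne_zero.mpr hw ((hcount w).trans (if_neg hwT))
  have hcard := hB s fun w hw ↦ ⟨hT (hmem hw), by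
    rw [hcount, if_pos (hmem hw),
      natCast_le_analyticOrderAt_iff_iteratedDeriv_eq_zero (hF w (hT (hmem hw)))]
    exact hord w (hmem hw)⟩
  simpa [hs] using hcard

lemma apply_eq_zero_of_odd_analyticOrderNatAt {𝕜 E : Type*} [NontriviallyNormedField 𝕜]
    [NormedAddCommGroup E] [NormedSpace 𝕜 E] {f : 𝕜 → E} {x : 𝕜}
    (hodd : Odd (analyticOrderNatAt f x)) : f x = 0 :=
  apply_eq_zero_of_analyticOrderAt_ne_zero fun h0 ↦ by simp [analyticOrderNatAt, h0] at hodd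

lemma isZeroMultiset_map_ofReal (hF : AnalyticOnNhd ℂ F D) {T : Finset ℝ}
    (hT : ∀ x ∈ T, (x : ℂ) ∈ D ∧ Odd (analyticOrderNatAt F x)) :
    IsZeroMultiset F D (T.val.map (↑)) := by
  refine .of_nodup hF (T.nodup.map Complex.ofReal_injective) fun w hw ↦ ?_
  obtain ⟨x, hx, rfl⟩ := Multiset.mem_map.mp hw
  exact ⟨(hT x hx).1, apply_eq_zero_of_odd_analyticOrderNatAt (hT x hx).2⟩

lemma not_isZeroMultiset_cons_cons (hB : ∀ s, IsZeroMultiset F D s → s.card < B) {s : Multiset ℂ}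
    (hBs : B ≤ s.card + 2) (v w : ℂ) : ¬ IsZeroMultiset F D (v ::ₘ w ::ₘ s) := fun h ↦ by
  have := hB _ h
  simp only [Multiset.card_cons] at this
  lia

lemma im_eq_zero_of_card_lt (hF : AnalyticOnNhd ℂ F D)
    (hD : ∀ z ∈ D, conj z ∈ D) (hFc : ∀ z, F (conj z) = conj (F z))
    (hB : ∀ s, IsZeroMultiset F D s → s.card < B) {T : Finset ℝ}
    (hT : ∀ x ∈ T, (x : ℂ) ∈ D ∧ Odd (analyticOrderNatAt F x)) (hBT : B ≤ T.card + 2)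
    {z : ℂ} (hz : z ∈ D) (hFz : F z = 0) : z.im = 0 := by
  have hs := isZeroMultiset_map_ofReal hF hT
  have hsim {w : ℂ} (hw : w.im ≠ 0) : w ∉ T.val.map ((↑) : ℝ → ℂ) := fun h ↦ by
    obtain ⟨x, -, rfl⟩ := Multiset.mem_map.mp h
    exact hw (Complex.ofReal_im x)
  by_contra him
  have hz' : conj z ∉ z ::ₘ T.val.map ((↑) : ℝ → ℂ) := by
    rw [Multiset.mem_cons, Complex.conj_eq_iff_im, not_or]
    exact ⟨him, hsim (by simpa using him)⟩
  exact not_isZeroMultiset_cons_cons hB (by simpa using hBT) _ _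
    ((hs.cons_of_notMem hF hz hFz (hsim him)).cons_of_notMem hF (hD z hz)
      (by rw [hFc, hFz, map_zero]) hz')

lemma deriv_ne_zero_of_card_lt (hF : AnalyticOnNhd ℂ F D)
    (hB : ∀ s, IsZeroMultiset F D s → s.card < B) {T : Finset ℝ}
    (hT : ∀ x ∈ T, (x : ℂ) ∈ D ∧ Odd (analyticOrderNatAt F x)) (hBT : B ≤ T.card + 2)
    {z : ℂ} (hz : z ∈ D) (hFz : F z = 0) : deriv F z ≠ 0 := by
  intro hderiv
  set s := T.val.map ((↑) : ℝ → ℂ)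
  have hs : IsZeroMultiset F D s := isZeroMultiset_map_ofReal hF hT
  have htwo : ((2 : ℕ) : ℕ∞) ≤ analyticOrderAt F z := by
    rw [natCast_le_analyticOrderAt_iff_iteratedDeriv_eq_zero (hF z hz)]
    intro i hi
    interval_cases i
    · simpa using hFz
    · rwa [iteratedDeriv_one]
  -- an odd multiplicity that is at least two is at least three
  have hcount : ((s.count z + 1 + 1 : ℕ) : ℕ∞) ≤ analyticOrderAt F z := by
    by_cases hzs : z ∈ s
    · rw [Multiset.count_eq_one_of_mem (T.nodup.map Complex.ofReal_injective) hzs]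
      obtain ⟨x, hx, rfl⟩ := Multiset.mem_map.mp hzs
      obtain ⟨n, hn⟩ := (hT x hx).2
      have hfin : analyticOrderAt F x ≠ ⊤ := fun h ↦ by simp [analyticOrderNatAt, h] at hn
      rw [← Nat.cast_analyticOrderNatAt hfin, Nat.cast_le] at htwo ⊢
      lia
    · rwa [Multiset.count_eq_zero_of_notMem hzs, zero_add]
  refine not_isZeroMultiset_cons_cons hB (by simpa [s] using hBT) z z ((hs.cons hz ?_).cons hz ?_)
  · exact le_trans (by exact_mod_cast Nat.le_succ _) hcount
  · rwa [Multiset.count_cons_self]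

end CardBound

end ZeroMultisets

section CauchyTransforms

open Topology

/-- The Cauchy transform `z ↦ ∫ φ(t) dμ(t) / (z - t)` of the measure `φ dμ`. -/
def cauchyTransform (μ : Measure ℝ) (φ : ℝ → ℂ) (z : ℂ) : ℂ := ∫ t, φ t / (z - t) ∂μ

variable {μ : Measure ℝ} {K : Set ℝ} {φ : ℝ → ℂ} {z w : ℂ}

lemma isClosed_cpx (hK : IsCompact K) : IsClosed (cpx K) :=
  (hK.image Complex.continuous_ofReal).isClosed

lemma ofReal_mem_cpx {t : ℝ} : (t : ℂ) ∈ cpx K ↔ t ∈ K :=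
  Complex.ofReal_injective.mem_set_image

lemma sub_ofReal_ne_zero (hz : z ∉ cpx K) {t : ℝ} (ht : t ∈ K) : z - t ≠ 0 := fun h ↦
  hz ⟨t, ht, (sub_eq_zero.mp h).symm⟩

lemma ofReal_sub_ne_zero (hz : z ∉ cpx K) {t : ℝ} (ht : t ∈ K) : t - z ≠ 0 := by
  rw [← neg_sub]
  exact neg_ne_zero.mpr (sub_ofReal_ne_zero hz ht)

lemma continuousOn_div_sub (hφ : ContinuousOn φ K) (hz : z ∉ cpx K) :
    ContinuousOn (fun t : ℝ ↦ φ t / (z - t)) K :=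
  hφ.div (by fun_prop) fun _ ht ↦ sub_ofReal_ne_zero hz ht

lemma exists_ball_forall_le_norm_sub (hK : IsCompact K) (hz : z ∉ cpx K) :
    ∃ ε > 0, ∀ x ∈ Metric.ball z ε, ∀ t ∈ K, ε ≤ ‖x - (t : ℂ)‖ := by
  obtain ⟨r, hr, hball⟩ := Metric.isOpen_iff.mp (isClosed_cpx hK).isOpen_compl z hz
  refine ⟨r / 2, by positivity, fun x hx t ht ↦ ?_⟩
  have hzt : r ≤ dist z t := by
    by_contra! hlt
    exact hball (Metric.mem_ball'.mpr hlt) ⟨t, ht, rfl⟩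
  have := dist_triangle z x t
  rw [Metric.mem_ball'] at hx
  rw [← dist_eq_norm]
  linarith

lemma degree_divByMonic_X_sub_C_lt {R : Type*} [Field R] {P : R[X]} {m : ℕ} (a : R)
    (hP : P.degree < (m + 1 : ℕ)) : (P /ₘ (X - C a)).degree < m := by
  rcases eq_or_ne P 0 with rfl | hP0
  · simp
  · have hlt := degree_divByMonic_lt P (X - C a) hP0 (by simp)
    exact hlt.trans_le (degree_le_of_natDegree_le
      (Nat.lt_succ_iff.mp ((natDegree_lt_iff_degree_lt hP0).mpr hP)))

lemma cauchyTransform_const_mul (c : ℂ) :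
    cauchyTransform μ (fun t ↦ c * φ t) z = c * cauchyTransform μ φ z := by
  simp only [cauchyTransform, mul_div_assoc, integral_const_mul]

variable (hK : IsCompact K) (hμ : ∀ᵐ t ∂μ, t ∈ K)

include hμ in
lemma cauchyTransform_congr {ψ : ℝ → ℂ} (h : EqOn φ ψ K) :
    cauchyTransform μ φ = cauchyTransform μ ψ := by
  funext z
  refine integral_congr_ae ?_
  filter_upwards [hμ] with t ht
  rw [h ht]

variable [IsFiniteMeasure μ]

include hK hμ

lemma integrable_of_continuousOn {E : Type*} [NormedAddCommGroup E] {f : ℝ → E}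
    (hf : ContinuousOn f K) : Integrable f μ := by
  simpa [IntegrableOn, Measure.restrict_eq_self_of_ae_mem hμ] using
    hf.integrableOn_compact (μ := μ) hK

lemma differentiableOn_cauchyTransform (hφ : ContinuousOn φ K) :
    DifferentiableOn ℂ (cauchyTransform μ φ) (cpx K)ᶜ := by
  intro z hz
  obtain ⟨ε, hε, hdist⟩ := exists_ball_forall_le_norm_sub hK hz
  obtain ⟨C, hC⟩ := hK.exists_bound_of_continuousOn hφ
  have hball {x : ℂ} (hx : x ∈ Metric.ball z ε) : x ∉ cpx K := by
    rintro ⟨t, ht, rfl⟩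
    have := hdist _ hx t ht
    rw [sub_self, norm_zero] at this
    exact this.not_gt hε
  have hderiv := hasDerivAt_integral_of_dominated_loc_of_deriv_le (𝕜 := ℂ) (μ := μ)
    (F := fun z t ↦ φ t / (z - t)) (F' := fun z t ↦ -φ t / (z - t) ^ 2)
    (x₀ := z) (s := Metric.ball z ε) (bound := fun _ ↦ C / ε ^ 2)
    (Metric.ball_mem_nhds _ hε) ?_ ?_ ?_ ?_ (integrable_const _) ?_
  · exact hderiv.2.differentiableAt.differentiableWithinAt
  · filter_upwards [Metric.ball_mem_nhds z hε] with x hx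
    exact (integrable_of_continuousOn hK hμ
      (continuousOn_div_sub hφ (hball hx))).aestronglyMeasurable
  · exact integrable_of_continuousOn hK hμ (continuousOn_div_sub hφ hz)
  · refine (integrable_of_continuousOn hK hμ ?_).aestronglyMeasurable
    exact hφ.neg.div (by fun_prop) fun _ ht ↦ pow_ne_zero _ (sub_ofReal_ne_zero hz ht)
  · filter_upwards [hμ] with t ht x hx
    have hC0 : 0 ≤ C := (norm_nonneg _).trans (hC t ht)
    rw [norm_div, norm_neg, norm_pow]
    gcongr
    exacts [hC t ht, hdist x hx t ht]
  · filter_upwards [hμ] with t ht x hx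
    simpa using (hasDerivAt_const x (φ t)).fun_div ((hasDerivAt_id' x).sub_const (t : ℂ))
      (sub_ofReal_ne_zero (hball hx) ht)

lemma analyticOnNhd_cauchyTransform (hφ : ContinuousOn φ K) :
    AnalyticOnNhd ℂ (cauchyTransform μ φ) (cpx K)ᶜ :=
  (differentiableOn_cauchyTransform hK hμ hφ).analyticOnNhd (isClosed_cpx hK).isOpen_compl

lemma cauchyTransform_add {ψ : ℝ → ℂ} (hφ : ContinuousOn φ K) (hψ : ContinuousOn ψ K)
    (hz : z ∉ cpx K) :
    cauchyTransform μ (φ + ψ) z = cauchyTransform μ φ z + cauchyTransform μ ψ z := by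
  simp only [cauchyTransform, Pi.add_apply, add_div]
  exact integral_add (integrable_of_continuousOn hK hμ (continuousOn_div_sub hφ hz))
    (integrable_of_continuousOn hK hμ (continuousOn_div_sub hψ hz))

lemma sub_mul_cauchyTransform (w : ℂ) (hφ : ContinuousOn φ K) (hz : z ∉ cpx K) :
    (z - w) * cauchyTransform μ φ z =
      ∫ t, φ t ∂μ + cauchyTransform μ (fun t ↦ (t - w) * φ t) z := by
  have hφ' : ContinuousOn (fun t : ℝ ↦ (t - w) * φ t) K := ContinuousOn.mul (by fun_prop) hφ
  rw [cauchyTransform, cauchyTransform, ← integral_const_mul,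
    ← integral_add (integrable_of_continuousOn hK hμ hφ)
      (integrable_of_continuousOn hK hμ (continuousOn_div_sub hφ' hz))]
  refine integral_congr_ae ?_
  filter_upwards [hμ] with t ht
  have := sub_ofReal_ne_zero hz ht
  field_simp
  ring

lemma exists_eval_mul_cauchyTransform (hφ : ContinuousOn φ K) {n : ℕ} {q : ℂ[X]}
    (hq : q.natDegree ≤ n) : ∃ P : ℂ[X], P.degree < n ∧ ∀ z ∉ cpx K,
      q.eval z * cauchyTransform μ φ z =
        P.eval z + cauchyTransform μ (fun t ↦ q.eval (t : ℂ) * φ t) z := by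
  induction n generalizing q with
  | zero =>
    obtain ⟨c, rfl⟩ := natDegree_eq_zero.mp (Nat.le_zero.mp hq)
    exact ⟨0, by simp, fun z _ ↦ by simp [cauchyTransform_const_mul]⟩
  | succ n ih =>
    obtain ⟨P, hP, hPz⟩ := ih (q := q.divX) (by rw [natDegree_divX_eq_natDegree_tsub_one]; lia)
    have hcont : ContinuousOn (fun t : ℝ ↦ q.divX.eval (t : ℂ) * φ t) K :=
      ContinuousOn.mul (by fun_prop) hφ
    refine ⟨X * P + C (∫ t, q.divX.eval (t : ℂ) * φ t ∂μ), ?_, fun z hz ↦ ?_⟩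
    · rw [degree_lt_iff_coeff_zero] at hP ⊢
      rintro (_ | m) hm
      · simp at hm
      · simp [hP m (by lia)]
    · have hdivX (x : ℂ) : q.eval x = x * q.divX.eval x + q.coeff 0 := by
        have := congrArg (eval x) (X_mul_divX_add q)
        simp only [eval_add, eval_mul, eval_X, eval_C] at this
        exact this.symm
      have hsub := sub_mul_cauchyTransform hK hμ 0 hcont hz
      have hadd := cauchyTransform_add hK hμ (ψ := fun t ↦ q.coeff 0 * φ t)
        (φ := fun t : ℝ ↦ t * (q.divX.eval (t : ℂ) * φ t))
        (ContinuousOn.mul (by fun_prop) hcont) (continuousOn_const.mul hφ) hz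
      have hsplit : (fun t : ℝ ↦ q.eval (t : ℂ) * φ t) =
          (fun t : ℝ ↦ t * (q.divX.eval (t : ℂ) * φ t)) + fun t ↦ q.coeff 0 * φ t := by
        funext t
        simp only [Pi.add_apply, hdivX (t : ℂ)]
        ring
      simp only [sub_zero] at hsub
      simp only [hsplit, hadd, cauchyTransform_const_mul, hdivX z, eval_add, eval_mul, eval_X,
        eval_C]
      linear_combination z * hPz z hz + hsub

lemma exists_sum_eval_mul_cauchyTransform {ι : Type*} {I : Finset ι} {n : ℕ} {q : ι → ℂ[X]}
    {φ : ι → ℝ → ℂ} (hφ : ∀ i ∈ I, ContinuousOn (φ i) K) (hq : ∀ i ∈ I, (q i).natDegree ≤ n) :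
    ∃ P : ℂ[X], P.degree < n ∧ ∀ z ∉ cpx K, ∑ i ∈ I, (q i).eval z * cauchyTransform μ (φ i) z =
      P.eval z + cauchyTransform μ (fun t ↦ ∑ i ∈ I, (q i).eval (t : ℂ) * φ i t) z := by
  classical
  induction I using Finset.induction with
  | empty => exact ⟨0, by simp, by simp [cauchyTransform]⟩
  | insert i I hi ih =>
    obtain ⟨P, hP, hPz⟩ := ih (fun i' h ↦ hφ i' (Finset.mem_insert_of_mem h))
      fun i' h ↦ hq i' (Finset.mem_insert_of_mem h)
    obtain ⟨R, hR, hRz⟩ := exists_eval_mul_cauchyTransform hK hμ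
      (hφ i (Finset.mem_insert_self i I)) (hq i (Finset.mem_insert_self i I))
    refine ⟨R + P, (degree_add_le R P).trans_lt (max_lt hR hP), fun z hz ↦ ?_⟩
    have hterm (i' : ι) (h : i' ∈ insert i I) :
        ContinuousOn (fun t : ℝ ↦ (q i').eval (t : ℂ) * φ i' t) K :=
      ContinuousOn.mul (by fun_prop) (hφ i' h)
    have hadd := cauchyTransform_add hK hμ (hterm i (Finset.mem_insert_self i I))
      (continuousOn_finsetSum I fun i' h ↦ hterm i' (Finset.mem_insert_of_mem h)) hz
    simp only [Finset.sum_insert hi, eval_add, hRz z hz, hPz z hz]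
    rw [Pi.add_def] at hadd
    rw [hadd]
    ring

lemma eval_add_cauchyTransform_eq_sub_mul {P : ℂ[X]} (hφ : ContinuousOn φ K) {w z : ℂ}
    (hw : w ∉ cpx K) (hz : z ∉ cpx K) (hzero : P.eval w + cauchyTransform μ φ w = 0) :
    P.eval z + cauchyTransform μ φ z =
      (z - w) * ((P /ₘ (X - C w)).eval z + cauchyTransform μ (fun t ↦ φ t / (t - w)) z) := by
  set ψ : ℝ → ℂ := fun t ↦ φ t / (t - w)
  have hψ : ContinuousOn ψ K := hφ.div (by fun_prop) fun _ ht ↦ ofReal_sub_ne_zero hw ht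
  have hφψ : EqOn (fun t ↦ (t - w) * ψ t) φ K := fun t ht ↦
    mul_div_cancel₀ (φ t) (ofReal_sub_ne_zero hw ht)
  have hdiv : P.eval w + (z - w) * (P /ₘ (X - C w)).eval z = P.eval z := by
    have := congrArg (eval z) (modByMonic_add_div P (X - C w))
    rwa [modByMonic_X_sub_C_eq_C_eval, eval_add, eval_C, eval_mul, eval_sub, eval_X, eval_C] at this
  have hCw := sub_mul_cauchyTransform hK hμ w hψ hw
  have hCz := sub_mul_cauchyTransform hK hμ w hψ hz
  rw [cauchyTransform_congr hμ hφψ] at hCw hCz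
  linear_combination hzero - hdiv + hCw - hCz

lemma integral_div_prod_eq_zero {m : ℕ} {s : Multiset ℂ} {P : ℂ[X]} (hφ : ContinuousOn φ K)
    (hP : P.degree < m) (hcard : s.card = m + 1)
    (hs : IsZeroMultiset (fun z ↦ P.eval z + cauchyTransform μ φ z) (cpx K)ᶜ s) :
    ∫ t, φ t / (s.map fun w ↦ (t : ℂ) - w).prod ∂μ = 0 := by
  induction m generalizing s P φ with
  | zero =>
    obtain ⟨w, rfl⟩ := Multiset.card_eq_one.mp hcard
    have hw := hs.apply_eq_zero (Multiset.mem_singleton_self w)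
    obtain rfl : P = 0 := by simpa using hP
    rw [eval_zero, zero_add, cauchyTransform, ← neg_eq_zero, ← integral_neg] at hw
    simpa [← div_neg] using hw
  | succ m ih =>
    obtain ⟨w, s, rfl⟩ : ∃ w s', s = w ::ₘ s' := by
      obtain ⟨w, hw⟩ := Multiset.card_pos_iff_exists_mem.mp (by lia : 0 < s.card)
      exact ⟨w, Multiset.exists_cons_of_mem hw⟩
    have hw : w ∉ cpx K := hs.mem (Multiset.mem_cons_self w s)
    have hψ : ContinuousOn (fun t : ℝ ↦ φ t / (t - w)) K :=
      hφ.div (by fun_prop) fun _ ht ↦ ofReal_sub_ne_zero hw ht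
    have hopen : IsOpen (cpx K)ᶜ := (isClosed_cpx hK).isOpen_compl
    have hzeros := hs.of_cons hopen
      (.add ((P /ₘ (X - C w)).differentiable.differentiableOn.analyticOnNhd hopen)
        (analyticOnNhd_cauchyTransform hK hμ hψ)) fun z hz ↦
      eval_add_cauchyTransform_eq_sub_mul hK hμ hφ hw hz
        (hs.apply_eq_zero (Multiset.mem_cons_self w s))
    rw [← ih hψ (degree_divByMonic_X_sub_C_lt w hP) (by simpa using hcard) hzeros]
    simp only [Multiset.map_cons, Multiset.prod_cons, div_div]

/-- The zeros of a function of the second kind off the support turn into orthogonality relations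
for the varying weight `φ / ∏ (t - w)`. -/
lemma integral_eval_mul_div_prod_eq_zero {n : ℕ} {s : Multiset ℂ} {P q : ℂ[X]}
    (hφ : ContinuousOn φ K) (hP : P.degree < n) (hq : q.natDegree + n < s.card)
    (hs : IsZeroMultiset (fun z ↦ P.eval z + cauchyTransform μ φ z) (cpx K)ᶜ s) :
    ∫ t, q.eval (t : ℂ) * φ t / (s.map fun w ↦ (t : ℂ) - w).prod ∂μ = 0 := by
  obtain ⟨R, hR, hRz⟩ := exists_eval_mul_cauchyTransform hK hμ hφ (q := q) le_rfl
  have hopen : IsOpen (cpx K)ᶜ := (isClosed_cpx hK).isOpen_compl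
  have hanalytic (p : ℂ[X]) : AnalyticOnNhd ℂ p.eval (cpx K)ᶜ :=
    p.differentiable.differentiableOn.analyticOnNhd hopen
  refine integral_div_prod_eq_zero hK hμ (P := q * P + R) (m := s.card - 1)
    (φ := fun t ↦ q.eval (t : ℂ) * φ t)
    (ContinuousOn.mul (by fun_prop) hφ) ?_ (by lia)
    ((hs.mul_left (hanalytic q)
      ((hanalytic P).add (analyticOnNhd_cauchyTransform hK hμ hφ))).congr hopen fun z hz ↦ ?_)
  · have hqP : (q * P).degree < (q.natDegree + n : ℕ) := by
      rw [degree_mul, Nat.cast_add]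
      exact (add_le_add_left degree_le_natDegree _).trans_lt
        (WithBot.add_lt_add_left WithBot.coe_ne_bot hP)
    exact (degree_add_le _ _).trans_lt (max_lt (hqP.trans_le (by exact_mod_cast by lia))
      (hR.trans_le (by exact_mod_cast by lia)))
  · simp only [Pi.mul_apply, Pi.add_apply, eval_add, eval_mul]
    linear_combination hRz z hz

end CauchyTransforms

section SignChanges

open Topology

variable {f : ℝ → ℝ} {a b : ℝ}

lemma eventually_nonneg_or_eventually_nonpos_of_even {x : ℝ} (hf : AnalyticAt ℝ f x)
    (heven : Even (analyticOrderNatAt f x)) :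
    (∀ᶠ t in 𝓝 x, 0 ≤ f t) ∨ ∀ᶠ t in 𝓝 x, f t ≤ 0 := by
  by_cases htop : analyticOrderAt f x = ⊤
  · exact .inl ((analyticOrderAt_eq_top.mp htop).mono fun t ht ↦ ht.ge)
  obtain ⟨u, hu, hux, hfu⟩ := (hf.analyticOrderNatAt_eq_iff htop).mp rfl
  rcases hux.lt_or_gt with hneg | hpos
  · right
    filter_upwards [hfu, hu.continuousAt.eventually_lt_const hneg] with t ht hut
    rw [ht]
    exact mul_nonpos_of_nonneg_of_nonpos (heven.pow_nonneg _) hut.le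
  · left
    filter_upwards [hfu, hu.continuousAt.eventually_const_lt hpos] with t ht hut
    rw [ht]
    exact mul_nonneg (heven.pow_nonneg _) hut.le

lemma signChangeAt_of_odd {x : ℝ} (hf : AnalyticAt ℝ f x)
    (hodd : Odd (analyticOrderNatAt f x)) : SignChangeAt f x := by
  intro δ hδ
  have htop : analyticOrderAt f x ≠ ⊤ := fun h ↦ by simp [analyticOrderNatAt, h] at hodd
  obtain ⟨u, hu, hux, hfu⟩ := (hf.analyticOrderNatAt_eq_iff htop).mp rfl
  have hsign : ∀ᶠ t in 𝓝 x, 0 < u x * u t :=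
    (continuousAt_const.mul hu.continuousAt).eventually_const_lt (mul_self_pos.mpr hux)
  obtain ⟨ε, hε, hball⟩ := Metric.eventually_nhds_iff_ball.mp (hfu.and hsign)
  set r := min ε δ / 2
  have hr : 0 < r := by positivity
  have hrε : r < ε := (half_lt_self (by positivity)).trans_le (min_le_left _ _)
  have hrδ : r < δ := (half_lt_self (by positivity)).trans_le (min_le_right _ _)
  obtain ⟨hleft, hul⟩ := hball (x - r) (by simpa [Real.dist_eq, abs_of_pos hr] using hrε)
  obtain ⟨hright, hur⟩ := hball (x + r) (by simpa [Real.dist_eq, abs_of_pos hr] using hrε)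
  refine ⟨x - r, x + r, by simpa [abs_of_pos hr] using hrδ, by simpa [abs_of_pos hr] using hrδ, ?_⟩
  have hneg : u (x - r) * u (x + r) * (r ^ analyticOrderNatAt f x) ^ 2 > 0 := by
    have hprod : 0 < u x ^ 2 * (u (x - r) * u (x + r)) := by linarith [mul_pos hul hur]
    have := pos_of_mul_pos_right hprod (sq_nonneg _)
    positivity
  simp only [hleft, hright, sub_sub_cancel_left, add_sub_cancel_left, smul_eq_mul, hodd.neg_pow]
  linarith

lemma analyticOrderAt_ne_top_of_finite_zeros (hab : a < b)
    (hfin : {t ∈ Icc a b | f t = 0}.Finite) {x : ℝ} (hx : x ∈ Icc a b) :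
    analyticOrderAt f x ≠ ⊤ := fun htop ↦ by
  obtain ⟨ε, hε, hball⟩ := Metric.eventually_nhds_iff_ball.mp (analyticOrderAt_eq_top.mp htop)
  have hlt : max a (x - ε) < min b (x + ε) :=
    max_lt (lt_min hab (by linarith [hx.1])) (lt_min (by linarith [hx.2]) (by linarith))
  refine Ioo_infinite hlt (hfin.subset fun t ht ↦ ?_)
  rw [mem_Ioo, max_lt_iff, lt_min_iff] at ht
  exact ⟨⟨ht.1.1.le, ht.2.1.le⟩, hball t (by
    rw [Metric.mem_ball, Real.dist_eq, abs_lt]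
    constructor <;> linarith)⟩

lemma nonneg_or_nonpos_of_even (hab : a < b) (hf : AnalyticOnNhd ℝ f (Icc a b))
    (hfin : {t ∈ Icc a b | f t = 0}.Finite)
    (heven : ∀ x ∈ Ioo a b, Even (analyticOrderNatAt f x)) :
    (∀ t ∈ Icc a b, 0 ≤ f t) ∨ ∀ t ∈ Icc a b, f t ≤ 0 := by
  have hcover : Ioo a b ⊆ {x | ∀ᶠ t in 𝓝 x, 0 ≤ f t} ∪ {x | ∀ᶠ t in 𝓝 x, f t ≤ 0} := fun x hx ↦
    eventually_nonneg_or_eventually_nonpos_of_even (hf x (Ioo_subset_Icc_self hx)) (heven x hx)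
  have hdisj : Ioo a b ∩ ({x | ∀ᶠ t in 𝓝 x, 0 ≤ f t} ∩ {x | ∀ᶠ t in 𝓝 x, f t ≤ 0}) = ∅ := by
    refine eq_empty_of_forall_notMem fun x ⟨hx, hnonneg, hnonpos⟩ ↦ ?_
    refine analyticOrderAt_ne_top_of_finite_zeros hab hfin (Ioo_subset_Icc_self hx) ?_
    rw [analyticOrderAt_eq_top]
    filter_upwards [hnonneg, hnonpos] with t h₁ h₂ using le_antisymm h₂ h₁
  have hcont : ContinuousOn f (closure (Ioo a b)) := closure_Ioo hab.ne ▸ hf.continuousOn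
  simp only [← closure_Ioo hab.ne]
  refine (isPreconnected_iff_subset_of_disjoint.mp isPreconnected_Ioo _ _
    isOpen_setOfPred_eventually_nhds isOpen_setOfPred_eventually_nhds hcover hdisj).imp
    (fun h t ht ↦ ?_) fun h t ht ↦ ?_
  · exact le_on_closure (fun x hx ↦ (h hx).self_of_nhds) continuousOn_const hcont ht
  · exact le_on_closure (fun x hx ↦ (h hx).self_of_nhds) hcont continuousOn_const ht

lemma msupport_subset {μ : Measure ℝ} {K : Set ℝ} (hK : IsClosed K) (hμ : ∀ᵐ t ∂μ, t ∈ K) :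
    msupport μ ⊆ K := fun x hx ↦ by
  by_contra hxK
  exact hx Kᶜ hK.isOpen_compl hxK (ae_iff.mp hμ)

lemma lt_of_infinite_msupport {μ : Measure ℝ} (hμ : ∀ᵐ t ∂μ, t ∈ Icc a b)
    (hinf : (msupport μ).Infinite) : a < b :=
  not_le.mp fun h ↦
    hinf ((subsingleton_Icc_of_ge h).anti (msupport_subset isClosed_Icc hμ)).finite

lemma integral_pos_of_mem_msupport {μ : Measure ℝ} [IsFiniteMeasure μ] {K : Set ℝ}
    (hK : IsCompact K) (hμ : ∀ᵐ t ∂μ, t ∈ K) (hf : ContinuousOn f K) (hnonneg : ∀ t ∈ K, 0 ≤ f t)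
    {x : ℝ} (hx : x ∈ msupport μ) (hfx : f x ≠ 0) : 0 < ∫ t, f t ∂μ := by
  rw [integral_pos_iff_support_of_nonneg_ae (hμ.mono hnonneg) (integrable_of_continuousOn hK hμ hf)]
  obtain ⟨U, hU, hfU⟩ := continuousOn_iff'.mp hf {0}ᶜ isOpen_compl_singleton
  have hxU : x ∈ U := (hfU.subset ⟨hfx, msupport_subset hK.isClosed hμ hx⟩).1
  refine (pos_iff_ne_zero.mpr (hx U hU hxU)).trans_le (measure_mono_ae ?_)
  filter_upwards [hμ] with t ht htU using (hfU.superset ⟨htU, ht⟩).1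

lemma integral_ne_zero_of_even {μ : Measure ℝ} [IsFiniteMeasure μ]
    (hμ : ∀ᵐ t ∂μ, t ∈ Icc a b) (hinf : (msupport μ).Infinite)
    (hf : AnalyticOnNhd ℝ f (Icc a b)) (hfin : {t ∈ Icc a b | f t = 0}.Finite)
    (heven : ∀ x ∈ Ioo a b, Even (analyticOrderNatAt f x)) : ∫ t, f t ∂μ ≠ 0 := by
  obtain ⟨x, hx, hfx⟩ := (hinf.sdiff hfin).nonempty
  have hsupp : msupport μ ⊆ Icc a b := msupport_subset isClosed_Icc hμ
  replace hfx : f x ≠ 0 := fun h ↦ hfx ⟨hsupp hx, h⟩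
  have hab := lt_of_infinite_msupport hμ hinf
  rcases nonneg_or_nonpos_of_even hab hf hfin heven with h | h
  · exact (integral_pos_of_mem_msupport isCompact_Icc hμ hf.continuousOn h hx hfx).ne'
  · have hneg := integral_pos_of_mem_msupport isCompact_Icc hμ hf.continuousOn.neg
      (fun t ht ↦ neg_nonneg.mpr (h t ht)) hx (neg_ne_zero.mpr hfx)
    simp only [Pi.neg_apply, integral_neg] at hneg
    exact (neg_pos.mp hneg).ne

lemma exists_odd_zeros_of_orthogonal {μ : Measure ℝ} [IsFiniteMeasure μ]
    (hμ : ∀ᵐ t ∂μ, t ∈ Icc a b) (hinf : (msupport μ).Infinite)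
    (hf : AnalyticOnNhd ℝ f (Icc a b)) (hfin : {t ∈ Icc a b | f t = 0}.Finite) {M : ℕ}
    (horth : ∀ Z : Finset ℝ, ↑Z ⊆ Ioo a b → Z.card < M → ∃ Q : ℝ → ℝ,
      AnalyticOnNhd ℝ Q (Icc a b) ∧
      (∀ x ∈ Icc a b, analyticOrderAt Q x = if x ∈ Z then 1 else 0) ∧ ∫ t, Q t * f t ∂μ = 0) :
    ∃ S : Finset ℝ, ↑S ⊆ Ioo a b ∧ M ≤ S.card ∧ ∀ x ∈ S, Odd (analyticOrderNatAt f x) := by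
  have hab := lt_of_infinite_msupport hμ hinf
  have hodd : {x ∈ Ioo a b | Odd (analyticOrderNatAt f x)}.Finite := by
    refine hfin.subset fun x ⟨hx, hxodd⟩ ↦ ⟨Ioo_subset_Icc_self hx, ?_⟩
    exact apply_eq_zero_of_odd_analyticOrderNatAt hxodd
  set Z := hodd.toFinset
  have hmemZ : ∀ x, x ∈ Z ↔ x ∈ Ioo a b ∧ Odd (analyticOrderNatAt f x) := fun x ↦ by simp [Z]
  refine ⟨Z, fun x hx ↦ ((hmemZ x).mp hx).1, ?_, fun x hx ↦ ((hmemZ x).mp hx).2⟩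
  by_contra! hlt
  obtain ⟨Q, hQ, hQZ, hint⟩ := horth Z (fun x hx ↦ ((hmemZ x).mp hx).1) hlt
  refine integral_ne_zero_of_even hμ hinf (hQ.mul hf) ?_ (fun x hx ↦ ?_) hint
  · refine (hfin.union Z.finite_toSet).subset fun t ⟨ht, h⟩ ↦ ?_
    refine (mul_eq_zero.mp h).symm.imp (fun hft ↦ ⟨ht, hft⟩) fun hQt ↦ ?_
    by_contra htZ
    exact (hQ t ht).analyticOrderAt_ne_zero.mpr hQt (by simp_all)
  · have hxI := Ioo_subset_Icc_self hx
    have hQx : analyticOrderNatAt Q x = if x ∈ Z then 1 else 0 := by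
      rw [analyticOrderNatAt, hQZ x hxI]; split_ifs <;> rfl
    change Even (analyticOrderNatAt (Q * f) x)
    rw [analyticOrderNatAt_mul (hQ x hxI) (hf x hxI) (by rw [hQZ x hxI]; split_ifs <;> simp)
      (analyticOrderAt_ne_top_of_finite_zeros hab hfin hxI), hQx]
    split_ifs with hxZ
    · exact odd_one.add_odd ((hmemZ x).mp hxZ).2
    · rw [zero_add, ← Nat.not_odd_iff_even]
      exact fun h ↦ hxZ ((hmemZ x).mpr ⟨hx, h⟩)

lemma analyticOrderAt_re_ofReal {F : ℂ → ℂ} (hFr : ∀ t : ℝ, (F t).im = 0) {x : ℝ}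
    (hF : AnalyticAt ℂ F x) :
    analyticOrderAt (fun t : ℝ ↦ (F t).re) x = analyticOrderAt F x := by
  have htendsto : Tendsto ((↑) : ℝ → ℂ) (𝓝 x) (𝓝 x) := Complex.continuous_ofReal.continuousAt
  by_cases htop : analyticOrderAt F x = ⊤
  · rw [htop, analyticOrderAt_eq_top]
    filter_upwards [htendsto.eventually (analyticOrderAt_eq_top.mp htop)] with t ht
    simp [ht]
  obtain ⟨g, hg, hgx, hFg⟩ := (hF.analyticOrderNatAt_eq_iff htop).mp rfl
  set n := analyticOrderNatAt F x
  have hFg' : ∀ᶠ t : ℝ in 𝓝 x, F t = ((t - x) ^ n : ℝ) * g t := by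
    filter_upwards [htendsto.eventually hFg] with t ht
    simpa using ht
  have hgim : (g x).im = 0 := by
    have hlim : Tendsto (fun t : ℝ ↦ (g t).im) (𝓝[≠] x) (𝓝 (g x).im) :=
      ((Complex.continuous_im.continuousAt.tendsto.comp hg.continuousAt).comp htendsto).mono_left
        nhdsWithin_le_nhds
    refine tendsto_nhds_unique hlim (tendsto_const_nhds.congr' ?_)
    filter_upwards [hFg'.filter_mono nhdsWithin_le_nhds, self_mem_nhdsWithin] with t ht htx
    have him := hFr t
    rw [ht, Complex.im_ofReal_mul] at him
    exact ((mul_eq_zero.mp him).resolve_left (pow_ne_zero _ (sub_ne_zero.mpr htx))).symm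
  rw [← Nat.cast_analyticOrderNatAt htop, hF.re_ofReal.analyticOrderAt_eq_natCast]
  refine ⟨fun t ↦ (g t).re, hg.re_ofReal, fun h ↦ hgx (Complex.ext h hgim), ?_⟩
  filter_upwards [hFg'] with t ht
  rw [ht, Complex.re_ofReal_mul, smul_eq_mul]

lemma exists_odd_zeros_of_complex_orthogonal {μ : Measure ℝ} [IsFiniteMeasure μ]
    (hμ : ∀ᵐ t ∂μ, t ∈ Icc a b) (hinf : (msupport μ).Infinite) {F : ℂ → ℂ}
    (hF : AnalyticOnNhd ℂ F (cpx (Icc a b))) (hFr : ∀ t : ℝ, (F t).im = 0)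
    (hfin : {z ∈ cpx (Icc a b) | F z = 0}.Finite) {M : ℕ}
    (horth : ∀ Z : Finset ℝ, ↑Z ⊆ Ioo a b → Z.card < M → ∃ Q : ℂ → ℂ,
      AnalyticOnNhd ℂ Q (cpx (Icc a b)) ∧ (∀ t : ℝ, (Q t).im = 0) ∧
      (∀ x ∈ Icc a b, analyticOrderAt Q (x : ℂ) = if x ∈ Z then 1 else 0) ∧
      ∫ t : ℝ, Q t * F t ∂μ = 0) :
    ∃ S : Finset ℝ, ↑S ⊆ Ioo a b ∧ M ≤ S.card ∧ ∀ x ∈ S, Odd (analyticOrderNatAt F (x : ℂ)) := by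
  have hfin' : {t ∈ Icc a b | (F t).re = 0}.Finite :=
    (hfin.preimage Complex.ofReal_injective.injOn).subset fun t ⟨ht, h⟩ ↦
      ⟨⟨t, ht, rfl⟩, Complex.ext h (hFr t)⟩
  have hreal {Q : ℂ → ℂ} (hQr : ∀ t : ℝ, (Q t).im = 0) (t : ℝ) :
      Q t * F t = ((Q t).re * (F t).re : ℝ) :=
    Complex.ext (by simp [hQr, hFr]) (by simp [hQr, hFr])
  obtain ⟨S, hS, hM, hodd⟩ :=
    exists_odd_zeros_of_orthogonal (M := M) hμ hinf hF.re_ofReal hfin' fun Z hZ hZM ↦ by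
      obtain ⟨Q, hQ, hQr, hQZ, hint⟩ := horth Z hZ hZM
      refine ⟨fun t ↦ (Q t).re, hQ.re_ofReal, fun x hx ↦ ?_, ?_⟩
      · rw [analyticOrderAt_re_ofReal hQr (hQ x ⟨x, hx, rfl⟩), hQZ x hx]
      · simpa only [hreal hQr, integral_complex_ofReal, Complex.ofReal_eq_zero] using hint
  refine ⟨S, hS, hM, fun x hx ↦ ?_⟩
  rw [analyticOrderNatAt, ← analyticOrderAt_re_ofReal hFr
    (hF x ⟨x, Ioo_subset_Icc_self (hS hx), rfl⟩)]
  exact hodd x hx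

lemma analyticOrderAt_prod_sub_ofReal (Z : Finset ℝ) (x : ℝ) :
    analyticOrderAt (fun z : ℂ ↦ ∏ y ∈ Z, (z - y)) x = if x ∈ Z then 1 else 0 := by
  induction Z using Finset.induction with
  | empty => simp [analyticOrderAt_eq_zero]
  | insert y Z hy ih =>
    simp only [Finset.prod_insert hy]
    rw [← Pi.mul_def, analyticOrderAt_mul (by fun_prop) (by fun_prop), ih]
    rcases eq_or_ne x y with rfl | hxy
    · simp [hy, analyticOrderAt_id_sub_const_self]
    · simp [hxy, analyticOrderAt_id_sub_const_of_ne]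

end SignChanges

section ZeroTransfer

open ComplexConjugate

lemma im_prod_sub_eq_zero {s : Multiset ℂ} (hs : s.map conj = s) (t : ℝ) :
    (s.map fun w ↦ (t : ℂ) - w).prod.im = 0 := by
  rw [← Complex.conj_eq_iff_im, map_multiset_prod, Multiset.map_map]
  conv_rhs => rw [← hs, Multiset.map_map]
  simp

lemma exists_odd_zeros_of_isZeroMultiset {μ : Measure ℝ} [IsFiniteMeasure μ] {a b : ℝ}
    (hμ : ∀ᵐ t ∂μ, t ∈ Icc a b) (hinf : (msupport μ).Infinite) {H : ℂ → ℂ}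
    (hH : AnalyticOnNhd ℂ H (cpx (Icc a b))) (hHr : ∀ t : ℝ, (H t).im = 0)
    (hfin : {z ∈ cpx (Icc a b) | H z = 0}.Finite) {P : ℂ[X]} {n : ℕ} (hP : P.degree < n)
    {s : Multiset ℂ} (hsc : s.map conj = s)
    (hs : IsZeroMultiset (fun z ↦ P.eval z + cauchyTransform μ (fun t ↦ H t) z)
      (cpx (Icc a b))ᶜ s) :
    ∃ T : Finset ℝ, ↑T ⊆ Ioo a b ∧ s.card ≤ n + T.card ∧
      ∀ x ∈ T, Odd (analyticOrderNatAt H (x : ℂ)) := by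
  set W : ℂ → ℂ := fun z ↦ (s.map fun w ↦ z - w).prod
  have hWpoly : W = ((s.map fun w ↦ X - C w).prod).eval := by
    funext z
    simp [W, eval_multiset_prod]
  have hW0 (x : ℝ) (hx : x ∈ Icc a b) : W x ≠ 0 := by
    simp only [W, ne_eq, Multiset.prod_eq_zero_iff, Multiset.mem_map, not_exists, not_and]
    exact fun w hw ↦ ofReal_sub_ne_zero (hs.mem hw) hx
  have hWinv (x : ℝ) (hx : x ∈ Icc a b) : AnalyticAt ℂ W⁻¹ x :=
    (hWpoly ▸ Polynomial.differentiable _ |>.analyticAt (x : ℂ)).inv (hW0 x hx)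
  have hcont : ContinuousOn (fun t : ℝ ↦ H t) (Icc a b) :=
    hH.continuousOn.comp (by fun_prop) fun t ht ↦ ⟨t, ht, rfl⟩
  obtain ⟨T, hT, hcard, hodd⟩ := exists_odd_zeros_of_complex_orthogonal (M := s.card - n)
    hμ hinf hH hHr hfin fun Z _ hZ ↦ by
      refine ⟨(fun z ↦ ∏ y ∈ Z, (z - (y : ℂ))) * W⁻¹, ?_, fun t ↦ ?_, fun x hx ↦ ?_, ?_⟩
      · rintro _ ⟨x, hx, rfl⟩
        exact AnalyticAt.mul (by fun_prop) (hWinv x hx)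
      · rw [Pi.mul_apply, Pi.inv_apply, ← Complex.conj_eq_iff_im, map_mul, map_inv₀, map_prod,
          Complex.conj_eq_iff_im.mpr (show (W t).im = 0 from im_prod_sub_eq_zero hsc t)]
        simp
      · rw [analyticOrderAt_mul (by fun_prop) (hWinv x hx), analyticOrderAt_prod_sub_ofReal,
          (hWinv x hx).analyticOrderAt_eq_zero.mpr (inv_ne_zero (hW0 x hx)), add_zero]
      · have := integral_eval_mul_div_prod_eq_zero isCompact_Icc hμ
          (q := ∏ y ∈ Z, (X - C (y : ℂ))) hcont hP
          (by rw [natDegree_finsetProd_X_sub_C_eq_card]; lia) hs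
        rw [← this]
        simp [eval_prod, W, div_eq_mul_inv, mul_right_comm]
  exact ⟨T, hT, by lia, hodd⟩

end ZeroTransfer

section NikishinSystems

open Topology ComplexConjugate

section

variable (μ : ℕ → Measure ℝ) (e : ℕ → ℝ)

lemma wt_self (j : ℕ) (z : ℂ) : wt μ e j j z = 1 := by
  simp [wt]

lemma wt_of_lt {j k : ℕ} (h : j < k) (z : ℂ) :
    wt μ e j k z = e (j + 1) * cauchyTransform (μ (j + 1)) (fun t ↦ wt μ e (j + 1) k t) z := by
  obtain ⟨d, rfl⟩ := Nat.exists_eq_add_of_lt h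
  cases d with
  | zero => simp [wt, nikhat, cauchyTransform]
  | succ d =>
    have hd : j + (d + 1) + 1 - (j + 1) = d + 1 := by lia
    have hd' : j + (d + 1) + 1 - (j + 1 + 1) = d := by lia
    have hlt : j + 1 < j + (d + 1) + 1 := by lia
    simp only [wt, h, hlt, if_true, hd, hd', nikhat, cauchyTransform]

lemma wt_conj (j k : ℕ) (z : ℂ) : wt μ e j k (conj z) = conj (wt μ e j k z) := by
  induction hd : k - j generalizing j z with
  | zero => simp [wt, show ¬ j < k by lia]
  | succ d ih =>
    have hreal (t : ℝ) : conj (wt μ e (j + 1) k t) = wt μ e (j + 1) k t := by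
      rw [← ih (j + 1) t (by lia), Complex.conj_ofReal]
    rw [wt_of_lt μ e (by lia), wt_of_lt μ e (by lia), map_mul, Complex.conj_ofReal,
      cauchyTransform, cauchyTransform, ← integral_conj]
    simp [hreal]

lemma linForm_conj (m j : ℕ) (g : ℕ → ℝ[X]) (z : ℂ) :
    linForm μ e m j g (conj z) = conj (linForm μ e m j g z) := by
  simp only [linForm, map_sum, map_mul, wt_conj, Polynomial.aeval_conj]

lemma im_linForm_ofReal (m j : ℕ) (g : ℕ → ℝ[X]) (t : ℝ) :
    (linForm μ e m j g t).im = 0 := by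
  rw [← Complex.conj_eq_iff_im, ← linForm_conj, Complex.conj_ofReal]

end

lemma tailSum_eq_add {m j : ℕ} (hj : j ≤ m) (N : ℕ → ℕ) :
    tailSum m N j = N j + tailSum m N (j + 1) := by
  rw [tailSum, ← Finset.insert_Icc_add_one_left_eq_Icc hj, Finset.sum_insert (by simp), tailSum]

namespace NikSys

variable {m : ℕ} (S : NikSys m) {j : ℕ}

instance (j : ℕ) : IsFiniteMeasure (S.μ j) := S.fin j

lemma mul_self_e (j : ℕ) : (S.e j : ℂ) * S.e j = 1 := by
  rcases S.sgn j with h | h <;> simp [h]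

lemma ae_mem_Icc (hj : j ≤ m) : ∀ᵐ t ∂S.μ j, t ∈ Icc (S.a j) (S.b j) := by
  refine ae_iff.mpr (measure_null_of_locally_null _ fun x hx ↦ ?_)
  have hxs : x ∉ msupport (S.μ j) := fun h ↦ hx (S.hull j hj ▸ subset_convexHull ℝ _ h)
  simp only [msupport, mem_ofPred_eq, not_forall, not_not] at hxs
  obtain ⟨U, hU, hxU, hUnull⟩ := hxs
  exact ⟨U, mem_nhdsWithin_of_mem_nhds (hU.mem_nhds hxU), hUnull⟩

/-- The region `ℂ ∖ Δ_{j+1}` (with `Δ_{m+1} = ∅`) on which the forms of index `j` are analytic. -/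
def region (j : ℕ) : Set ℂ :=
  if j < m then (cpx (Icc (S.a (j + 1)) (S.b (j + 1))))ᶜ else univ

lemma region_of_lt (hj : j < m) : S.region j = (cpx (Icc (S.a (j + 1)) (S.b (j + 1))))ᶜ :=
  if_pos hj

lemma isOpen_region (j : ℕ) : IsOpen (S.region j) := by
  unfold region
  split_ifs
  exacts [(isClosed_cpx isCompact_Icc).isOpen_compl, isOpen_univ]

lemma cpx_Icc_subset_region (j : ℕ) : cpx (Icc (S.a j) (S.b j)) ⊆ S.region j := by
  rintro _ ⟨t, ht, rfl⟩
  unfold region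
  split_ifs with hj
  · intro h
    exact (S.disj j hj).subset ⟨ht, ofReal_mem_cpx.mp h⟩
  · trivial

lemma ofReal_mem_region {t : ℝ} (ht : t ∈ Icc (S.a j) (S.b j)) : (t : ℂ) ∈ S.region j :=
  S.cpx_Icc_subset_region j ⟨t, ht, rfl⟩

lemma conj_mem_region {z : ℂ} (hz : z ∈ S.region j) : conj z ∈ S.region j := by
  unfold region at *
  split_ifs at * with hj
  · rintro ⟨t, ht, htz⟩
    refine hz ⟨t, ht, ?_⟩
    simpa using congrArg conj htz
  · trivial

lemma analyticOnNhd_wt {k : ℕ} (hjk : j ≤ k) (hk : k ≤ m) :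
    AnalyticOnNhd ℂ (wt S.μ S.e j k) (S.region j) := by
  induction hd : k - j generalizing j with
  | zero =>
    obtain rfl : j = k := by lia
    rw [funext (wt_self S.μ S.e j)]
    exact analyticOnNhd_const
  | succ d ih =>
    have hcont : ContinuousOn (fun t : ℝ ↦ wt S.μ S.e (j + 1) k t)
        (Icc (S.a (j + 1)) (S.b (j + 1))) :=
      (ih (by lia) (by lia)).continuousOn.comp (by fun_prop) fun _ ↦ S.ofReal_mem_region
    rw [funext (wt_of_lt S.μ S.e (show j < k by lia)), S.region_of_lt (by lia)]
    exact analyticOnNhd_const.mul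
      (analyticOnNhd_cauchyTransform isCompact_Icc (S.ae_mem_Icc (by lia)) hcont)

lemma continuousOn_wt {k : ℕ} (hjk : j ≤ k) (hk : k ≤ m) :
    ContinuousOn (fun t : ℝ ↦ wt S.μ S.e j k t) (Icc (S.a j) (S.b j)) :=
  (S.analyticOnNhd_wt hjk hk).continuousOn.comp (by fun_prop) fun _ ↦ S.ofReal_mem_region

lemma analyticOnNhd_linForm (j : ℕ) (g : ℕ → ℝ[X]) :
    AnalyticOnNhd ℂ (linForm S.μ S.e m j g) (S.region j) := by
  refine Finset.analyticOnNhd_fun_sum _ fun k hk ↦ ?_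
  rw [Finset.mem_Icc] at hk
  exact AnalyticOnNhd.mul (fun z _ ↦ (g k).differentiable_aeval.analyticAt z)
    (S.analyticOnNhd_wt hk.1 hk.2)

lemma exists_e_mul_linForm_eq (hj : j < m) {g : ℕ → ℝ[X]} {n : ℕ}
    (hg : ∀ i ∈ Icc j m, (g i).degree < n) :
    ∃ P : ℂ[X], P.degree < n ∧ ∀ z ∈ S.region j,
      S.e (j + 1) * linForm S.μ S.e m j g z =
        P.eval z + cauchyTransform (S.μ (j + 1)) (fun t ↦ linForm S.μ S.e m (j + 1) g t) z := by
  have haeval (i : ℕ) (z : ℂ) : aeval z (g i) = ((g i).map Complex.ofRealHom).eval z :=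
    (eval_map_algebraMap (g i) z).symm
  obtain ⟨R, hR, hRz⟩ := exists_sum_eval_mul_cauchyTransform isCompact_Icc (S.ae_mem_Icc hj)
    (I := Finset.Icc (j + 1) m) (n := n) (q := fun i ↦ (g i).map Complex.ofRealHom)
    (φ := fun i t ↦ wt S.μ S.e (j + 1) i t)
    (fun i hi ↦ S.continuousOn_wt (Finset.mem_Icc.mp hi).1 (Finset.mem_Icc.mp hi).2)
    fun i hi ↦ natDegree_map_le.trans (natDegree_le_of_degree_le
      (hg i (by rw [Finset.mem_Icc] at hi; exact ⟨by lia, hi.2⟩)).le)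
  refine ⟨C (S.e (j + 1) : ℂ) * (g j).map Complex.ofRealHom + R, ?_, fun z hz ↦ ?_⟩
  · refine (degree_add_le _ _).trans_lt (max_lt ?_ hR)
    rw [C_mul']
    exact (degree_smul_le _ _).trans_lt (degree_map_le.trans_lt (hg j ⟨le_rfl, hj.le⟩))
  · rw [S.region_of_lt hj] at hz
    have hterm : ∀ i ∈ Finset.Icc (j + 1) m, S.e (j + 1) * (aeval z (g i) * wt S.μ S.e j i z) =
        ((g i).map Complex.ofRealHom).eval z *
          cauchyTransform (S.μ (j + 1)) (fun t ↦ wt S.μ S.e (j + 1) i t) z := fun i hi ↦ by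
      rw [wt_of_lt S.μ S.e (Finset.mem_Icc.mp hi).1, haeval]
      linear_combination ((g i).map Complex.ofRealHom).eval z * cauchyTransform (S.μ (j + 1))
        (fun t ↦ wt S.μ S.e (j + 1) i t) z * S.mul_self_e (j + 1)
    simp only [linForm, ← Finset.insert_Icc_add_one_left_eq_Icc hj.le]
    rw [Finset.sum_insert (by simp), wt_self, mul_one, mul_add, Finset.mul_sum,
      Finset.sum_congr rfl hterm, hRz z hz, eval_add, eval_mul, eval_C, haeval, add_assoc]
    simp only [haeval]

lemma exists_odd_zeros_linForm_succ (hj : j < m) {g : ℕ → ℝ[X]} {n : ℕ}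
    (hg : ∀ i ∈ Icc j m, (g i).degree < n)
    (hfin : {z ∈ S.region (j + 1) | linForm S.μ S.e m (j + 1) g z = 0}.Finite) {s : Multiset ℂ}
    (hs : IsZeroMultiset (linForm S.μ S.e m j g) (S.region j) s) :
    ∃ T : Finset ℝ, ↑T ⊆ Ioo (S.a (j + 1)) (S.b (j + 1)) ∧ s.card ≤ n + T.card ∧
      ∀ x ∈ T, Odd (analyticOrderNatAt (linForm S.μ S.e m (j + 1) g) (x : ℂ)) := by
  obtain ⟨P, hP, hdecomp⟩ := S.exists_e_mul_linForm_eq hj hg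
  obtain ⟨s', hs', hcard, hconj⟩ := hs.exists_conj_invariant (S.analyticOnNhd_linForm j g)
    (fun _ ↦ S.conj_mem_region) (linForm_conj S.μ S.e m j g)
  have hzeros := (hs'.mul_left (q := fun _ ↦ (S.e (j + 1) : ℂ)) analyticOnNhd_const
    (S.analyticOnNhd_linForm j g)).congr (S.isOpen_region j) hdecomp
  rw [S.region_of_lt hj] at hzeros
  obtain ⟨T, hT, hsT, hodd⟩ := exists_odd_zeros_of_isZeroMultiset (S.ae_mem_Icc hj) (S.inf _ hj)
    ((S.analyticOnNhd_linForm (j + 1) g).mono (S.cpx_Icc_subset_region (j + 1)))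
    (im_linForm_ofReal S.μ S.e m (j + 1) g)
    (hfin.subset fun z hz ↦ ⟨S.cpx_Icc_subset_region (j + 1) hz.1, hz.2⟩) hP hconj hzeros
  exact ⟨T, hT, hcard.trans hsT, hodd⟩

lemma card_lt_of_forall_eq_zero (hj : j ≤ m) {g : ℕ → ℝ[X]} {n : ℕ} (hg : (g j).degree < n)
    (hgj : g j ≠ 0) (hgt : ∀ i ∈ Ioc j m, g i = 0) {s : Multiset ℂ}
    (hs : IsZeroMultiset (linForm S.μ S.e m j g) (S.region j) s) : s.card < n := by
  have hform : linForm S.μ S.e m j g = ((g j).map Complex.ofRealHom).eval := by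
    funext z
    rw [linForm, Finset.sum_eq_single_of_mem j (Finset.left_mem_Icc.mpr hj), wt_self, mul_one]
    · exact (eval_map_algebraMap (g j) z).symm
    · intro i hi hij
      rw [Finset.mem_Icc] at hi
      rw [hgt i ⟨by lia, hi.2⟩, map_zero, zero_mul]
  have hzeros : IsZeroMultiset ((g j).map Complex.ofRealHom).eval univ s := fun w _ ↦
    ⟨mem_univ w, hform ▸ hs.count_le w⟩
  refine (hzeros.card_le_natDegree ?_).trans_lt ?_
  · rwa [Polynomial.map_ne_zero_iff Complex.ofRealHom.injective]
  · rw [natDegree_map]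
    exact (natDegree_lt_iff_degree_lt hgj).mpr hg

theorem card_lt_tailSum (hj : j ≤ m) {N : ℕ → ℕ} (hN : AntitoneOn N (Icc j m)) {g : ℕ → ℝ[X]}
    (hg : ∀ i ∈ Icc j m, (g i).degree < N i) (hne : ∃ i ∈ Icc j m, g i ≠ 0) (s : Multiset ℂ)
    (hs : IsZeroMultiset (linForm S.μ S.e m j g) (S.region j) s) : s.card < tailSum m N j := by
  induction hd : m - j generalizing j s with
  | zero =>
    obtain rfl : j = m := by lia
    obtain ⟨i, hi, hgi⟩ := hne
    obtain rfl : i = j := le_antisymm hi.2 hi.1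
    simpa [tailSum] using S.card_lt_of_forall_eq_zero hj (hg i hi) hgi (by simp) hs
  | succ d ih =>
    rw [tailSum_eq_add hj]
    by_cases hgt : ∀ i ∈ Ioc j m, g i = 0
    · obtain ⟨i, hi, hgi⟩ := hne
      obtain rfl : j = i := by_contra fun h ↦ hgi (hgt i ⟨lt_of_le_of_ne hi.1 h, hi.2⟩)
      exact Nat.lt_add_right _ (S.card_lt_of_forall_eq_zero hj (hg j hi) hgi hgt hs)
    · push Not at hgt
      have hsub : Icc (j + 1) m ⊆ Icc j m := Icc_subset_Icc_left (Nat.le_succ j)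
      have hbound := ih (by lia) (hN.mono hsub) (fun i hi ↦ hg i (hsub hi)) hgt
      obtain ⟨T, hT, hcard, hodd⟩ := S.exists_odd_zeros_linForm_succ (n := N j) (by lia)
        (fun i hi ↦ (hg i hi).trans_le
          (by exact_mod_cast hN (left_mem_Icc.mpr hj) hi hi.1))
        (finite_zeros_of_card_lt (S.analyticOnNhd_linForm (j + 1) g)
          fun s hs ↦ hbound s hs (by lia)) hs
      have hTcard := hbound _ (isZeroMultiset_map_ofReal (S.analyticOnNhd_linForm (j + 1) g)
        fun x hx ↦ ⟨S.ofReal_mem_region (Ioo_subset_Icc_self (hT hx)), hodd x hx⟩) (by lia)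
      rw [Multiset.card_map, Finset.card_val] at hTcard
      lia

end NikSys

end NikishinSystems

section Interpolation

lemma exists_sum_eval_mul_eq_zero {K ι : Type*} [Field K] (I : Finset ι) (n : ι → ℕ)
    (w : ι → K → K) (Z : Finset K) (hZ : Z.card < ∑ i ∈ I, n i) :
    ∃ q : ι → K[X], (∀ i ∈ I, (q i).degree < n i) ∧ (∃ i ∈ I, q i ≠ 0) ∧
      ∀ z ∈ Z, ∑ i ∈ I, (q i).eval z * w i z = 0 := by
  classical
  let L : ((i : I) → degreeLT K (n i)) →ₗ[K] (Z → K) := LinearMap.pi fun z ↦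
    ∑ i : I, w i z • (leval (z : K)).comp ((degreeLT K (n i)).subtype.comp (LinearMap.proj i))
  have (d : ℕ) : Module.Finite K (degreeLT K d) := .equiv (degreeLTEquiv K d).symm
  have hdim (d : ℕ) : Module.finrank K (degreeLT K d) = d := by
    simp [(degreeLTEquiv K d).finrank_eq]
  have hker : LinearMap.ker L ≠ ⊥ := by
    apply LinearMap.ker_ne_bot_of_finrank_lt
    simpa [Module.finrank_pi_fintype, hdim, Finset.sum_attach I n] using hZ
  obtain ⟨v, hv, hv0⟩ := Submodule.exists_mem_ne_zero_of_ne_bot hker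
  refine ⟨fun i ↦ if hi : i ∈ I then v ⟨i, hi⟩ else 0, fun i hi ↦ ?_, ?_, fun z hz ↦ ?_⟩
  · simpa [hi] using mem_degreeLT.mp (v ⟨i, hi⟩).2
  · obtain ⟨i, hi⟩ := Function.ne_iff.mp hv0
    exact ⟨i, i.2, by simpa using hi⟩
  · have hLz : L v ⟨z, hz⟩ = 0 := congrFun (LinearMap.mem_ker.mp hv) ⟨z, hz⟩
    rw [← Finset.sum_coe_sort, ← hLz]
    simp [L, mul_comm]

end Interpolation

section MultipleOrthogonality

lemma tailSum_zero (m : ℕ) (n : ℕ → ℕ) : tailSum m n 0 = msum m n := by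
  rw [tailSum, msum, Finset.range_eq_Ico, Finset.Ico_add_one_right_eq_Icc]

namespace Decr

variable {m : ℕ} {n : ℕ → ℕ}

lemma antitoneOn (h : Decr m n) (j : ℕ) : AntitoneOn n (Icc j m) := by
  intro i _ i' hi' hii'
  induction i', hii' using Nat.le_induction with
  | base => rfl
  | succ i' hii' ih => exact (h i' hi'.2).trans (ih ⟨by grind, by grind⟩)

lemma exists_le_msum_eq (h : Decr m n) {r : ℕ} (hr : r ≤ msum m n) :
    ∃ n' ≤ n, Decr m n' ∧ msum m n' = r := by
  refine ⟨fun j ↦ min (n j) (r - ∑ i ∈ Finset.range j, n i), fun j ↦ min_le_left _ _, ?_, ?_⟩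
  · intro j hj
    have := h j hj
    simp only [Finset.sum_range_succ]
    lia
  · have hpartial (J : ℕ) : ∑ j ∈ Finset.range J, min (n j) (r - ∑ i ∈ Finset.range j, n i) =
        min (∑ j ∈ Finset.range J, n j) r := by
      induction J with
      | zero => simp
      | succ J ih =>
        rw [Finset.sum_range_succ, Finset.sum_range_succ, ih]
        lia
    exact (hpartial (m + 1)).trans (min_eq_right hr)

end Decr

namespace NikSys

variable {m : ℕ} (S : NikSys m)

lemma exists_linForm_eq_zero (n : ℕ → ℕ) {Z : Finset ℝ} (hZ : Z.card < msum m n) :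
    ∃ q : ℕ → ℝ[X], (∀ k ≤ m, (q k).degree < n k) ∧ (∃ k ≤ m, q k ≠ 0) ∧
      ∀ t ∈ Z, linForm S.μ S.e m 0 q t = 0 := by
  rw [← tailSum_zero] at hZ
  obtain ⟨q, hq, ⟨k, hk, hqk⟩, hqZ⟩ := exists_sum_eval_mul_eq_zero (Finset.Icc 0 m) n
    (fun k (t : ℝ) ↦ (wt S.μ S.e 0 k (t : ℂ)).re) Z hZ
  refine ⟨q, fun k hk ↦ hq k (by simpa using hk), ⟨k, by simpa using hk, hqk⟩, fun t ht ↦ ?_⟩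
  have hterm (k : ℕ) : (aeval (t : ℂ) (q k) * wt S.μ S.e 0 k t).re =
      (q k).eval t * (wt S.μ S.e 0 k t).re := by
    rw [← Complex.coe_algebraMap, aeval_algebraMap_apply, Complex.coe_algebraMap,
      Complex.re_ofReal_mul, coe_aeval_eq_eval]
  refine Complex.ext ?_ (im_linForm_ofReal S.μ S.e m 0 q t)
  simpa only [linForm, Complex.re_sum, hterm, Complex.zero_re] using hqZ t ht

-- The zeros prescribed in `Z` exhaust the zero count of a form of total degree `Z.card + 1`.
lemma exists_linForm_analyticOrderAt_eq {n : ℕ → ℕ} (hn : Decr m n) {Z : Finset ℝ}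
    (hZ : ↑Z ⊆ Icc (S.a 0) (S.b 0)) (hcard : Z.card < msum m n) :
    ∃ q : ℕ → ℝ[X], (∀ k ≤ m, (q k).degree < n k) ∧ ∀ x ∈ Icc (S.a 0) (S.b 0),
      analyticOrderAt (linForm S.μ S.e m 0 q) (x : ℂ) = if x ∈ Z then 1 else 0 := by
  obtain ⟨n', hn', hdecr, hsum⟩ := hn.exists_le_msum_eq (Nat.succ_le_of_lt hcard)
  obtain ⟨q, hq, ⟨k, hk, hqk⟩, hqZ⟩ := S.exists_linForm_eq_zero n' (Z := Z) (by lia)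
  refine ⟨q, fun k hk ↦ (hq k hk).trans_le (mod_cast hn' k), fun x hx ↦ ?_⟩
  have hinj := Complex.ofReal_injective
  have hzeros : IsZeroMultiset (linForm S.μ S.e m 0 q) (S.region 0) (Z.val.map (↑)) := by
    refine .of_nodup (S.analyticOnNhd_linForm 0 q) (Z.nodup.map hinj) fun w hw ↦ ?_
    obtain ⟨t, ht, rfl⟩ := Multiset.mem_map.mp hw
    exact ⟨S.ofReal_mem_region (hZ ht), hqZ t ht⟩
  have hcount : ((Z.val.map (↑)).count (x : ℂ)) = if x ∈ Z then 1 else 0 := by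
    rw [Multiset.count_map_eq_count' _ _ hinj, Multiset.count_eq_of_nodup Z.nodup]
    simp
  have hlt : ¬ ((Z.val.map (↑)).count (x : ℂ) + 1 : ℕ) ≤
      analyticOrderAt (linForm S.μ S.e m 0 q) (x : ℂ) := fun hle ↦ by
    have := S.card_lt_tailSum m.zero_le (hdecr.antitoneOn 0) (fun i hi ↦ hq i hi.2)
      ⟨k, ⟨k.zero_le, hk⟩, hqk⟩ _ (hzeros.cons (S.ofReal_mem_region hx) hle)
    simp [tailSum_zero, hsum] at this
  have hge := hzeros.count_le x
  rw [Nat.cast_add, Nat.cast_one, ENat.add_one_le_iff (ENat.natCast_ne_top _), not_lt] at hlt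
  rw [hlt.antisymm hge, hcount]
  split_ifs <;> rfl

lemma integrable_pow_mul {F : ℂ → ℂ}
    (hF : ContinuousOn (fun t : ℝ ↦ F t) (Icc (S.a 0) (S.b 0))) {k : ℕ} (hk : k ≤ m) (ν : ℕ) :
    Integrable (fun t : ℝ ↦ (t : ℂ) ^ ν * (wt S.μ S.e 0 k t * F t)) (S.μ 0) :=
  integrable_of_continuousOn isCompact_Icc (S.ae_mem_Icc m.zero_le) <|
    (by fun_prop : Continuous fun t : ℝ ↦ (t : ℂ) ^ ν).continuousOn.mul
      ((S.continuousOn_wt k.zero_le hk).mul hF)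

/-- `F` is multiple orthogonal with respect to the measures `s_{0,k} = ⟨σ_0, …, σ_k⟩` generated by
`S`, up to the degrees prescribed by `n`. -/
def IsMultipleOrthogonal (n : ℕ → ℕ) (F : ℂ → ℂ) : Prop :=
  ∀ k ≤ m, ∀ ν < n k, sInt S.μ S.e 0 k (fun x ↦ (x : ℂ) ^ ν * F x) = 0

namespace IsMultipleOrthogonal

variable {S} {n : ℕ → ℕ} {F G : ℂ → ℂ}

lemma integral_pow_mul_eq_zero (hF : S.IsMultipleOrthogonal n F) {k ν : ℕ} (hk : k ≤ m)
    (hν : ν < n k) : ∫ t : ℝ, (t : ℂ) ^ ν * (wt S.μ S.e 0 k t * F t) ∂S.μ 0 = 0 := by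
  have h := (mul_eq_zero.mp (hF k hk ν hν)).resolve_left
    (left_ne_zero_of_mul_eq_one (S.mul_self_e 0))
  convert h using 3
  ring

lemma linear_combination (hF : S.IsMultipleOrthogonal n F) (hG : S.IsMultipleOrthogonal n G)
    (hFc : ContinuousOn (fun t : ℝ ↦ F t) (Icc (S.a 0) (S.b 0)))
    (hGc : ContinuousOn (fun t : ℝ ↦ G t) (Icc (S.a 0) (S.b 0))) (c d : ℂ) :
    S.IsMultipleOrthogonal n fun z ↦ c * F z + d * G z := fun k hk ν hν ↦ by
  calc sInt S.μ S.e 0 k (fun x ↦ (x : ℂ) ^ ν * (c * F x + d * G x))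
      = S.e 0 * ∫ t : ℝ, (c * ((t : ℂ) ^ ν * (wt S.μ S.e 0 k t * F t)) +
          d * ((t : ℂ) ^ ν * (wt S.μ S.e 0 k t * G t))) ∂S.μ 0 := by
        unfold sInt
        congr 2 with t
        ring
    _ = 0 := by
        rw [integral_add ((S.integrable_pow_mul hFc hk ν).const_mul c)
          ((S.integrable_pow_mul hGc hk ν).const_mul d), integral_const_mul, integral_const_mul,
          hF.integral_pow_mul_eq_zero hk hν,
          hG.integral_pow_mul_eq_zero hk hν]
        simp

lemma integral_linForm_mul_eq_zero (hF : S.IsMultipleOrthogonal n F)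
    (hFc : ContinuousOn (fun t : ℝ ↦ F t) (Icc (S.a 0) (S.b 0))) {q : ℕ → ℝ[X]}
    (hq : ∀ k ≤ m, (q k).degree < n k) :
    ∫ t : ℝ, linForm S.μ S.e m 0 q t * F t ∂S.μ 0 = 0 := by
  have hint {k : ℕ} (hk : k ≤ m) (ν : ℕ) : Integrable
      (fun t : ℝ ↦ ((q k).coeff ν : ℂ) * ((t : ℂ) ^ ν * (wt S.μ S.e 0 k t * F t))) (S.μ 0) :=
    (S.integrable_pow_mul hFc hk ν).const_mul _
  have hexpand (t : ℝ) : linForm S.μ S.e m 0 q t * F t = ∑ k ∈ Finset.Icc 0 m,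
      ∑ ν ∈ (q k).support, ((q k).coeff ν : ℂ) * ((t : ℂ) ^ ν * (wt S.μ S.e 0 k t * F t)) := by
    simp only [linForm, Polynomial.aeval_def, eval₂_eq_sum, Polynomial.sum, Finset.sum_mul,
      Complex.coe_algebraMap, mul_assoc]
  simp only [hexpand]
  rw [integral_finsetSum _ fun k hk ↦
    integrable_finsetSum _ fun ν _ ↦ hint (Finset.mem_Icc.mp hk).2 ν]
  refine Finset.sum_eq_zero fun k hk ↦ ?_
  have hk := (Finset.mem_Icc.mp hk).2
  rw [integral_finsetSum _ fun ν _ ↦ hint hk ν]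
  refine Finset.sum_eq_zero fun ν hν ↦ ?_
  have hν := (le_degree_of_ne_zero (mem_support_iff.mp hν)).trans_lt (hq k hk)
  rw [integral_const_mul, hF.integral_pow_mul_eq_zero hk (mod_cast hν), mul_zero]

theorem exists_odd_zeros (hF : S.IsMultipleOrthogonal n F) (hn : Decr m n)
    (hFa : AnalyticOnNhd ℂ F (cpx (Icc (S.a 0) (S.b 0)))) (hFr : ∀ t : ℝ, (F t).im = 0)
    (hfin : {z ∈ cpx (Icc (S.a 0) (S.b 0)) | F z = 0}.Finite) :
    ∃ T : Finset ℝ, ↑T ⊆ Ioo (S.a 0) (S.b 0) ∧ msum m n ≤ T.card ∧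
      ∀ x ∈ T, Odd (analyticOrderNatAt F (x : ℂ)) := by
  refine exists_odd_zeros_of_complex_orthogonal (S.ae_mem_Icc m.zero_le) (S.inf 0 m.zero_le)
    hFa hFr hfin fun Z hZ hcard ↦ ?_
  obtain ⟨q, hq, horder⟩ :=
    S.exists_linForm_analyticOrderAt_eq hn (hZ.trans Ioo_subset_Icc_self) hcard
  have hFc : ContinuousOn (fun t : ℝ ↦ F t) (Icc (S.a 0) (S.b 0)) :=
    hFa.continuousOn.comp (by fun_prop) fun t ht ↦ ⟨t, ht, rfl⟩
  exact ⟨_, (S.analyticOnNhd_linForm 0 q).mono (S.cpx_Icc_subset_region 0),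
    im_linForm_ofReal S.μ S.e m 0 q, horder, hF.integral_linForm_mul_eq_zero hFc hq⟩

end IsMultipleOrthogonal

end NikSys

end MultipleOrthogonality

section CombinedForms

section MultiIndices

variable {m l : ℕ} {n : ℕ → ℕ}

lemma le_bump (l : ℕ) (n : ℕ → ℕ) : n ≤ bump l n := fun _ ↦ by
  unfold bump
  split_ifs <;> lia

lemma tailSum_bump_of_le {j : ℕ} (hj : j ≤ l) (hl : l ≤ m) :
    tailSum m (bump l n) j = tailSum m n j + 1 := by
  have hbump (i : ℕ) : bump l n i = n i + if i = l then 1 else 0 := by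
    unfold bump
    split_ifs <;> rfl
  simp [tailSum, hbump, Finset.sum_add_distrib, hj, hl]

lemma tailSum_bump_of_lt {j : ℕ} (hj : l < j) : tailSum m (bump l n) j = tailSum m n j :=
  Finset.sum_congr rfl fun _ hi ↦ if_neg (hj.trans_le (Finset.mem_Icc.mp hi).1).ne'

lemma Decr.ite_lt (hn : Decr m n) (l : ℕ) : Decr m fun i ↦ if i < l then n i else 0 :=
  fun j hj ↦ by
    have := hn j hj
    grind

lemma msum_ite_lt_add_le (hl : l ≤ m) :
    msum m (fun i ↦ if i < l then n i else 0) + n l ≤ msum m n := by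
  have hsplit (i : ℕ) : (if i < l then n i else 0) + (if i = l then n i else 0) ≤ n i := by
    grind
  calc msum m (fun i ↦ if i < l then n i else 0) + n l
      = ∑ i ∈ Finset.range (m + 1), ((if i < l then n i else 0) + if i = l then n i else 0) := by
        rw [msum, Finset.sum_add_distrib, Finset.sum_ite_eq', if_pos (by simpa [Nat.lt_succ_iff])]
    _ ≤ msum m n := Finset.sum_le_sum fun i _ ↦ hsplit i

end MultiIndices

lemma linForm_combination (μ : ℕ → Measure ℝ) (e : ℕ → ℝ) (m j : ℕ) (A A' : ℕ → ℝ[X]) (c d : ℝ)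
    (z : ℂ) : linForm μ e m j (fun i ↦ C c * A i + C d * A' i) z =
      c * linForm μ e m j A z + d * linForm μ e m j A' z := by
  simp only [linForm, Finset.mul_sum, ← Finset.sum_add_distrib]
  refine Finset.sum_congr rfl fun k _ ↦ ?_
  simp only [map_add, map_mul, aeval_C, Complex.coe_algebraMap]
  ring

lemma linForm_eq_zero {m j : ℕ} {g : ℕ → ℝ[X]} (hg : ∀ i ∈ Icc j m, g i = 0) (μ : ℕ → Measure ℝ)
    (e : ℕ → ℝ) (z : ℂ) : linForm μ e m j g z = 0 :=
  Finset.sum_eq_zero fun i hi ↦ by rw [hg i (Finset.mem_Icc.mp hi), map_zero, zero_mul]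

namespace NikSys

section OneSystem

variable {m : ℕ} (S : NikSys m) {j k : ℕ} {g : ℕ → ℝ[X]}

lemma finite_zeros_linForm (hj : j ≤ m) (hg : ∃ i ∈ Icc j m, g i ≠ 0) :
    {z ∈ S.region j | linForm S.μ S.e m j g z = 0}.Finite := by
  let n := (Finset.Icc j m).sup (fun i ↦ (g i).natDegree) + 1
  refine finite_zeros_of_card_lt (S.analyticOnNhd_linForm j g)
    (S.card_lt_tailSum hj (N := fun _ ↦ n) antitoneOn_const (fun i hi ↦ ?_) hg)
  refine degree_le_natDegree.trans_lt (Nat.cast_lt.mpr (Nat.lt_succ_of_le ?_))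
  exact Finset.le_sup (f := fun i ↦ (g i).natDegree) (Finset.mem_Icc.mpr hi)

lemma eq_zero_of_linForm_eq_zero (hj : j ≤ m)
    (h : ∀ z ∈ S.region j, linForm S.μ S.e m j g z = 0) : ∀ i ∈ Icc j m, g i = 0 := by
  by_contra! hg
  refine S.inf j hj (((S.finite_zeros_linForm hj hg).preimage
    Complex.ofReal_injective.injOn).subset fun t ht ↦ ?_)
  have htr := S.ofReal_mem_region (S.hull j hj ▸ subset_convexHull ℝ _ ht)
  exact ⟨htr, h t htr⟩

lemma signChangeAt_linForm {x : ℝ} (hx : x ∈ Ioo (S.a j) (S.b j))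
    (hodd : Odd (analyticOrderNatAt (linForm S.μ S.e m j g) x)) :
    SignChangeAt (fun t ↦ (linForm S.μ S.e m j g t).re) x := by
  have hF := S.analyticOnNhd_linForm j g x (S.ofReal_mem_region (Ioo_subset_Icc_self hx))
  refine signChangeAt_of_odd hF.re_ofReal ?_
  rwa [analyticOrderNatAt, analyticOrderAt_re_ofReal (im_linForm_ofReal S.μ S.e m j g) hF]

lemma exists_odd_zeros_linForm {N : ℕ → ℕ} (hN : Decr m N) (hg : ∀ i ≤ m, (g i).degree < N i)
    (hk : k ≤ m) (hgk : g k ≠ 0) {r : ℕ}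
    (hbase : ∃ T : Finset ℝ, ↑T ⊆ Ioo (S.a 0) (S.b 0) ∧ tailSum m N 0 ≤ T.card + r ∧
      ∀ x ∈ T, Odd (analyticOrderNatAt (linForm S.μ S.e m 0 g) (x : ℂ))) (hj : j ≤ k) :
    ∃ T : Finset ℝ, ↑T ⊆ Ioo (S.a j) (S.b j) ∧ tailSum m N j ≤ T.card + r ∧
      ∀ x ∈ T, Odd (analyticOrderNatAt (linForm S.μ S.e m j g) (x : ℂ)) := by
  induction j with
  | zero => exact hbase
  | succ j ih =>
    obtain ⟨T, hT, hcard, hodd⟩ := ih (by lia)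
    obtain ⟨T', hT', hcard', hodd'⟩ := S.exists_odd_zeros_linForm_succ (n := N j) (by lia)
      (fun i hi ↦ (hg i hi.2).trans_le (mod_cast hN.antitoneOn j ⟨le_rfl, by lia⟩ hi hi.1))
      (S.finite_zeros_linForm (by lia) ⟨k, ⟨hj, hk⟩, hgk⟩)
      (isZeroMultiset_map_ofReal (S.analyticOnNhd_linForm j g) fun x hx ↦
        ⟨S.ofReal_mem_region (Ioo_subset_Icc_self (hT hx)), hodd x hx⟩)
    refine ⟨T', hT', ?_, hodd'⟩
    rw [Multiset.card_map, Finset.card_val] at hcard'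
    rw [tailSum_eq_add (by lia)] at hcard
    lia

end OneSystem

section TwoSystems

variable {m₁ m₂ : ℕ} {S1 : NikSys m₁} {S2 : NikSys m₂}

lemma Icc_eq_Icc (hμ : S1.μ 0 = S2.μ 0) : Icc (S1.a 0) (S1.b 0) = Icc (S2.a 0) (S2.b 0) := by
  rw [← S1.hull 0 m₁.zero_le, ← S2.hull 0 m₂.zero_le, hμ]

lemma continuousOn_linForm (hμ : S1.μ 0 = S2.μ 0) (g : ℕ → ℝ[X]) :
    ContinuousOn (fun t : ℝ ↦ linForm S1.μ S1.e m₁ 0 g t) (Icc (S2.a 0) (S2.b 0)) :=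
  (S1.analyticOnNhd_linForm 0 g).continuousOn.comp (by fun_prop) fun _ ht ↦
    S1.ofReal_mem_region (Icc_eq_Icc hμ ▸ ht)

variable {n2 : ℕ → ℕ} {g : ℕ → ℝ[X]}

lemma IsMultipleOrthogonal.exists_odd_zeros_linForm_zero (hμ : S1.μ 0 = S2.μ 0)
    (h2 : Decr m₂ n2) (horth : S2.IsMultipleOrthogonal n2 (linForm S1.μ S1.e m₁ 0 g))
    (hg : ∃ i ≤ m₁, g i ≠ 0) :
    ∃ T : Finset ℝ, ↑T ⊆ Ioo (S1.a 0) (S1.b 0) ∧ msum m₂ n2 ≤ T.card ∧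
      ∀ x ∈ T, Odd (analyticOrderNatAt (linForm S1.μ S1.e m₁ 0 g) (x : ℂ)) := by
  have hsub : cpx (Icc (S2.a 0) (S2.b 0)) ⊆ S1.region 0 :=
    Icc_eq_Icc hμ ▸ S1.cpx_Icc_subset_region 0
  obtain ⟨i, hi, hgi⟩ := hg
  have hfin := S1.finite_zeros_linForm m₁.zero_le ⟨i, ⟨i.zero_le, hi⟩, hgi⟩
  rw [← interior_Icc, Icc_eq_Icc hμ, interior_Icc]
  exact horth.exists_odd_zeros h2 ((S1.analyticOnNhd_linForm 0 g).mono hsub)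
    (im_linForm_ofReal S1.μ S1.e m₁ 0 g) (hfin.subset fun z hz ↦ ⟨hsub hz.1, hz.2⟩)

lemma IsMultipleOrthogonal.msum_lt (hμ : S1.μ 0 = S2.μ 0) (h2 : Decr m₂ n2)
    (horth : S2.IsMultipleOrthogonal n2 (linForm S1.μ S1.e m₁ 0 g)) {N : ℕ → ℕ} (hN : Decr m₁ N)
    (hdeg : ∀ i ≤ m₁, (g i).degree < N i) (hg : ∃ i ≤ m₁, g i ≠ 0) : msum m₂ n2 < msum m₁ N := by
  obtain ⟨T, hT, hcard, hodd⟩ := horth.exists_odd_zeros_linForm_zero hμ h2 hg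
  obtain ⟨i, hi, hgi⟩ := hg
  have hlt := S1.card_lt_tailSum m₁.zero_le (hN.antitoneOn 0) (fun i hi ↦ hdeg i hi.2)
    ⟨i, ⟨i.zero_le, hi⟩, hgi⟩ _ (isZeroMultiset_map_ofReal (S1.analyticOnNhd_linForm 0 g)
      fun x hx ↦ ⟨S1.ofReal_mem_region (Ioo_subset_Icc_self (hT hx)), hodd x hx⟩)
  rw [Multiset.card_map, Finset.card_val, tailSum_zero] at hlt
  exact hcard.trans_lt hlt

lemma IsMultipleOrthogonal.le_of_forall_eq_zero (hμ : S1.μ 0 = S2.μ 0) (h2 : Decr m₂ n2)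
    (horth : S2.IsMultipleOrthogonal n2 (linForm S1.μ S1.e m₁ 0 g)) {N : ℕ → ℕ} (hN : Decr m₁ N)
    (hdeg : ∀ i ≤ m₁, (g i).degree < N i) {k l : ℕ} (hk : k ≤ m₁) (hgk : g k ≠ 0)
    (hgt : ∀ i ∈ Ioc k m₁, g i = 0) (hl : l ≤ m₁) (hsum : msum m₁ N ≤ msum m₂ n2 + N l) :
    l ≤ k := by
  by_contra! hkl
  refine (horth.msum_lt hμ h2 (hN.ite_lt l) (fun i hi ↦ ?_) ⟨k, hk, hgk⟩).not_ge ?_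
  · split_ifs with hil
    · exact hdeg i hi
    · rw [hgt i ⟨by lia, hi⟩, degree_zero]
      exact WithBot.bot_lt_coe _
  · have := msum_ite_lt_add_le (n := N) hl
    lia

theorem IsMultipleOrthogonal.linForm_zero_structure (hμ : S1.μ 0 = S2.μ 0) (h2 : Decr m₂ n2)
    (horth : S2.IsMultipleOrthogonal n2 (linForm S1.μ S1.e m₁ 0 g)) {N : ℕ → ℕ} (hN : Decr m₁ N)
    (hdeg : ∀ i ≤ m₁, (g i).degree < N i) {k : ℕ} (hk : k ≤ m₁) (hgk : g k ≠ 0)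
    (hsum : msum m₁ N ≤ msum m₂ n2 + 2) {j : ℕ} (hj : j ≤ k) :
    CZerosLT (linForm S1.μ S1.e m₁ j g) (S1.region j) (tailSum m₁ N j) ∧
    (∃ T : Finset ℝ, ↑T ⊆ Ioo (S1.a j) (S1.b j) ∧ tailSum m₁ N j ≤ T.card + 2 ∧
      ∀ x ∈ T, SignChangeAt (fun t : ℝ ↦ (linForm S1.μ S1.e m₁ j g t).re) x) ∧
    ∀ z ∈ S1.region j, linForm S1.μ S1.e m₁ j g z = 0 →
      z.im = 0 ∧ deriv (linForm S1.μ S1.e m₁ j g) z ≠ 0 := by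
  have hF := S1.analyticOnNhd_linForm j g
  have hcount := S1.card_lt_tailSum (hj.trans hk) (hN.antitoneOn j) (fun i hi ↦ hdeg i hi.2)
    ⟨k, ⟨hj, hk⟩, hgk⟩
  obtain ⟨T₀, hT₀, hcard₀, hodd₀⟩ := horth.exists_odd_zeros_linForm_zero hμ h2 ⟨k, hk, hgk⟩
  have hbase : tailSum m₁ N 0 ≤ T₀.card + 2 := by
    rw [tailSum_zero]
    lia
  obtain ⟨T, hT, hcard, hodd⟩ :=
    S1.exists_odd_zeros_linForm hN hdeg hk hgk ⟨T₀, hT₀, hbase, hodd₀⟩ hj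
  have hTreg : ∀ x ∈ T, (x : ℂ) ∈ S1.region j ∧ Odd (analyticOrderNatAt _ (x : ℂ)) := fun x hx ↦
    ⟨S1.ofReal_mem_region (Ioo_subset_Icc_self (hT hx)), hodd x hx⟩
  exact ⟨cZerosLT_of_card_lt hF hcount,
    ⟨T, hT, hcard, fun x hx ↦ S1.signChangeAt_linForm (hT hx) (hodd x hx)⟩, fun z hz hFz ↦
    ⟨im_eq_zero_of_card_lt hF (fun _ ↦ S1.conj_mem_region) (linForm_conj S1.μ S1.e m₁ j g) hcount
      hTreg hcard hz hFz, deriv_ne_zero_of_card_lt hF hcount hTreg hcard hz hFz⟩⟩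

end TwoSystems

end NikSys

lemma IsMOP.isMultipleOrthogonal_combination {m₁ m₂ : ℕ} {S1 : NikSys m₁} {S2 : NikSys m₂}
    (hμ : S1.μ 0 = S2.μ 0) {n1 n1' n2 n2' : ℕ → ℕ} {A A' : ℕ → ℝ[X]}
    (hA : IsMOP m₁ m₂ S1 S2 n1 n2 A) (hA' : IsMOP m₁ m₂ S1 S2 n1' n2' A') (h2 : n2 ≤ n2')
    (c d : ℝ) : S2.IsMultipleOrthogonal n2
      (linForm S1.μ S1.e m₁ 0 fun i ↦ C c * A i + C d * A' i) := by
  have horth : S2.IsMultipleOrthogonal n2 (linForm S1.μ S1.e m₁ 0 A) := hA.2.2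
  have horth' : S2.IsMultipleOrthogonal n2 (linForm S1.μ S1.e m₁ 0 A') := fun k hk ν hν ↦
    hA'.2.2 k hk ν (hν.trans_le (h2 k))
  rw [funext (linForm_combination S1.μ S1.e m₁ 0 A A' c d)]
  exact horth.linear_combination horth' (NikSys.continuousOn_linForm hμ A)
    (NikSys.continuousOn_linForm hμ A') c d

theorem combination_zero_structure_general {m₁ m₂ : ℕ} {S1 : NikSys m₁} {S2 : NikSys m₂}
    (hμ : S1.μ 0 = S2.μ 0) {n1 n2 : ℕ → ℕ} {l₁ : ℕ} (hl₁ : l₁ ≤ m₁) (h1l : Decr m₁ (bump l₁ n1))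
    (h2 : Decr m₂ n2) (hsum : msum m₂ n2 + 1 = msum m₁ n1) (hn1 : 0 < n1 l₁) {g : ℕ → ℝ[X]}
    (hdeg : ∀ i ≤ m₁, (g i).degree < bump l₁ n1 i)
    (horth : S2.IsMultipleOrthogonal n2 (linForm S1.μ S1.e m₁ 0 g)) {k : ℕ} (hk : k ≤ m₁)
    (hknz : ∃ z ∈ S1.region k, linForm S1.μ S1.e m₁ k g z ≠ 0)
    (hkmax : ∀ j, k < j → j ≤ m₁ → ∀ z ∈ S1.region j, linForm S1.μ S1.e m₁ j g z = 0) :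
    l₁ ≤ k ∧
    (∀ j ≤ l₁, CZerosLE (linForm S1.μ S1.e m₁ j g) (S1.region j) (tailSum m₁ n1 j) ∧
      ∃ T : Finset ℝ, ↑T ⊆ Ioo (S1.a j) (S1.b j) ∧ tailSum m₁ n1 j - 1 ≤ T.card ∧
        ∀ x ∈ T, SignChangeAt (fun t : ℝ ↦ (linForm S1.μ S1.e m₁ j g t).re) x) ∧
    (∀ j, l₁ < j → j ≤ k → CZerosLT (linForm S1.μ S1.e m₁ j g) (S1.region j) (tailSum m₁ n1 j) ∧
      ∃ T : Finset ℝ, ↑T ⊆ Ioo (S1.a j) (S1.b j) ∧ tailSum m₁ n1 j - 2 ≤ T.card ∧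
        ∀ x ∈ T, SignChangeAt (fun t : ℝ ↦ (linForm S1.μ S1.e m₁ j g t).re) x) ∧
    ∀ j ≤ k, ∀ z ∈ S1.region j, linForm S1.μ S1.e m₁ j g z = 0 →
      z.im = 0 ∧ deriv (linForm S1.μ S1.e m₁ j g) z ≠ 0 := by
  have hgt : ∀ i ∈ Ioc k m₁, g i = 0 := fun i hi ↦
    S1.eq_zero_of_linForm_eq_zero hi.2 (hkmax i hi.1 hi.2) i ⟨le_rfl, hi.2⟩
  have hgk : g k ≠ 0 := fun hgk ↦ by
    obtain ⟨z, -, hz⟩ := hknz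
    refine hz (linForm_eq_zero (fun i hi ↦ ?_) _ _ z)
    rcases hi.1.eq_or_lt with rfl | hki
    exacts [hgk, hgt i ⟨hki, hi.2⟩]
  have hbump : msum m₁ (bump l₁ n1) = msum m₂ n2 + 2 := by
    rw [← tailSum_zero, tailSum_bump_of_le l₁.zero_le hl₁, tailSum_zero, ← hsum]
  have hlk : l₁ ≤ k := by
    refine horth.le_of_forall_eq_zero hμ h2 h1l hdeg hk hgk hgt hl₁ ?_
    have : bump l₁ n1 l₁ = n1 l₁ + 1 := if_pos rfl
    lia
  have hzero {j : ℕ} (hj : j ≤ k) :=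
    horth.linForm_zero_structure hμ h2 h1l hdeg hk hgk hbump.le hj
  refine ⟨hlk, fun j hj ↦ ?_, fun j hlj hj ↦ ?_, fun j hj ↦ (hzero hj).2.2⟩
  · obtain ⟨hlt, ⟨T, hT, hcard, hsign⟩, -⟩ := hzero (hj.trans hlk)
    rw [tailSum_bump_of_le hj hl₁] at hlt hcard
    exact ⟨fun Z ord hZ hord ↦ Nat.le_of_lt_succ (hlt Z ord hZ hord), T, hT, by lia, hsign⟩
  · obtain ⟨hlt, ⟨T, hT, hcard, hsign⟩, -⟩ := hzero hj
    rw [tailSum_bump_of_lt hlj] at hlt hcard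
    exact ⟨hlt, T, hT, by lia, hsign⟩

end CombinedForms

/-- Let `k` be the largest index with `𝒢_{n,k} ≢ 0`.  Then `k ≥ l₁`;
for `j ≤ l₁` the form `𝒢_{n,j}` has at most `N_{1,j}` zeros in `ℂ ∖ Δ¹_{j+1}` and at
least `N_{1,j} - 1` sign changes in the interior of `Δ¹_j`; for `l₁ < j ≤ k` it has at
most `N_{1,j} - 1` zeros and at least `N_{1,j} - 2` sign changes; in particular all its
zeros in `ℂ ∖ Δ¹_{j+1}` are real and simple. -/
theorem combination_zero_structure
    (m₁ m₂ : ℕ) (S1 : NikSys m₁) (S2 : NikSys m₂)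
    (hbase : S1.μ 0 = S2.μ 0 ∧ S1.e 0 = S2.e 0)
    (n1 n2 : ℕ → ℕ) (l₁ l₂ : ℕ) (hl₁ : l₁ ≤ m₁) (hl₂ : l₂ ≤ m₂)
    (h1 : Decr m₁ n1) (h2 : Decr m₂ n2)
    (h1l : Decr m₁ (bump l₁ n1)) (h2l : Decr m₂ (bump l₂ n2))
    (hsum : msum m₂ n2 + 1 = msum m₁ n1) (hlast : 1 ≤ n1 m₁)
    (A A' : ℕ → Polynomial ℝ)
    (hA : IsMOP m₁ m₂ S1 S2 n1 n2 A) (hAm : MonicLast m₁ A)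
    (hA' : IsMOP m₁ m₂ S1 S2 (bump l₁ n1) (bump l₂ n2) A') (hA'm : MonicLast m₁ A')
    (c d : ℝ) (hcd : 0 < |c| + |d|)
    -- the region `ℂ ∖ Δ¹_{j+1}` and the form `𝒢_{n,j}`:
    (reg : ℕ → Set ℂ)
    (hreg : ∀ j, reg j = if j < m₁ then (cpx (Set.Icc (S1.a (j+1)) (S1.b (j+1))))ᶜ
      else (Set.univ : Set ℂ))
    (G : ℕ → ℂ → ℂ)
    (hG : ∀ j, G j = fun z => (c : ℂ) * linForm S1.μ S1.e m₁ j A z +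
      (d : ℂ) * linForm S1.μ S1.e m₁ j A' z)
    -- `k` is the largest index `k' ≤ m₁` with `𝒢_{n,k'} ≢ 0`:
    (k : ℕ) (hk : k ≤ m₁)
    (hknz : ∃ z ∈ reg k, G k z ≠ 0)
    (hkmax : ∀ j, k < j → j ≤ m₁ → ∀ z ∈ reg j, G j z = 0) :
    l₁ ≤ k ∧
    (∀ j ≤ l₁,
      CZerosLE (G j) (reg j) (tailSum m₁ n1 j) ∧
      ∃ S : Finset ℝ, ↑S ⊆ Set.Ioo (S1.a j) (S1.b j) ∧
        tailSum m₁ n1 j - 1 ≤ S.card ∧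
        ∀ x ∈ S, SignChangeAt (fun t : ℝ => (G j (t : ℂ)).re) x) ∧
    (∀ j, l₁ < j → j ≤ k →
      CZerosLT (G j) (reg j) (tailSum m₁ n1 j) ∧
      ∃ S : Finset ℝ, ↑S ⊆ Set.Ioo (S1.a j) (S1.b j) ∧
        tailSum m₁ n1 j - 2 ≤ S.card ∧
        ∀ x ∈ S, SignChangeAt (fun t : ℝ => (G j (t : ℂ)).re) x) ∧
    (∀ j ≤ k, ∀ z ∈ reg j, G j z = 0 → z.im = 0 ∧ deriv (G j) z ≠ 0) := by
  obtain rfl : reg = S1.region := funext hreg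
  obtain rfl : G = fun j ↦ linForm S1.μ S1.e m₁ j fun i ↦ C c * A i + C d * A' i :=
    funext fun j ↦ (hG j).trans (funext fun z ↦ (linForm_combination _ _ _ _ _ _ _ _ z).symm)
  have hdeg : ∀ i ≤ m₁, (C c * A i + C d * A' i).degree < bump l₁ n1 i := fun i hi ↦ by
    rw [C_mul', C_mul']
    exact (degree_add_le _ _).trans_lt (max_lt
      ((degree_smul_le _ _).trans_lt ((hA.1 i hi).trans_le (mod_cast le_bump l₁ n1 i)))
      ((degree_smul_le _ _).trans_lt (hA'.1 i hi)))
  exact combination_zero_structure_general hbase.1 hl₁ h1l h2 hsum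
    (hlast.trans (h1.antitoneOn 0 ⟨l₁.zero_le, hl₁⟩ ⟨m₁.zero_le, le_rfl⟩ hl₁)) hdeg
    (hA.isMultipleOrthogonal_combination hbase.1 hA' (le_bump l₂ n2) c d) hk hknz hkmax

end
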